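/- arXiv:1504.08265 — 3 statements merged into one kernel-verified Lean document; each statement's English description precedes it below -/
import Mathlib

section
/- For every root request r_{i*}, the sum of the radii over its tree is at most twice its own radius: Σ_{i∈Tree(i*)} ρ(i) ≤ 2·ρ(i*). -/
open Finset

/-- A replica is a pair `(v, t)` of a network node and a time. -/
abbrev Replica : Type := ℕ × ℕ

/-- A (directed) grid edge is a pair of replicas. -/
abbrev GEdge : Type := Replica × Replica

/-- Horizontal directed edge `((v,t),(v+1,t))`. -/
def isHoriz (e : GEdge) : Prop := e.2 = (e.1.1 + 1, e.1.2)

/-- Vertical arc `((v,t),(v,t+1))`. -/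
def isArc (e : GEdge) : Prop := e.2 = (e.1.1, e.1.2 + 1)

def isGridEdge (e : GEdge) : Prop := isHoriz e ∨ isArc e

/-- The quarter ball `B(r,ρ)`: replicas `(u,s)` with `u ≤ v`, `s ≤ t` and
`(v−u)+(t−s) ≤ ρ`. -/
def qball (r : Replica) (ρ : ℕ) : Set Replica :=
  {q | q.1 ≤ r.1 ∧ q.2 ≤ r.2 ∧ (r.1 - q.1) + (r.2 - q.2) ≤ ρ}

/-- Grid edges with both endpoints in the quarter ball `B(r,ρ)`. -/
def ballEdge (r : Replica) (ρ : ℕ) (e : GEdge) : Prop :=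
  isGridEdge e ∧ e.1 ∈ qball r ρ ∧ e.2 ∈ qball r ρ

/-- Two quarter balls are edge-disjoint if they share no grid edge. -/
def BallsEdgeDisjoint (r : Replica) (ρ : ℕ) (r' : Replica) (ρ' : ℕ) : Prop :=
  ∀ e : GEdge, ¬ (ballEdge r ρ e ∧ ballEdge r' ρ' e)

/-- The square `Sq(r,ρ) = [v−ρ,v] × [t−ρ,t]`. -/
def SqRect (r : Replica) (ρ : ℕ) : Set Replica :=
  {q | r.1 - ρ ≤ q.1 ∧ q.1 ≤ r.1 ∧ r.2 - ρ ≤ q.2 ∧ q.2 ≤ r.2}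

/-- Directed `L∞` distance `d∞(q,r)`: `max(v−u, t−s)` if `u ≤ v` and `s ≤ t`,
and `∞` otherwise. -/
def distInf (q r : Replica) : ℕ∞ :=
  if q.1 ≤ r.1 ∧ q.2 ≤ r.2 then ((max (r.1 - q.1) (r.2 - q.2) : ℕ) : ℕ∞) else ⊤

/-- The replicas of an edge set: `(0,0)` together with all endpoints of its edges. -/
def Repl (F : Finset GEdge) : Set Replica :=
  insert ((0, 0) : Replica) {q | ∃ e ∈ F, q = e.1 ∨ q = e.2}

/-- The arcs of the vertical path at node `u` from time `s` to time `τ`. -/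
def vertPath (u s τ : ℕ) : Finset GEdge :=
  (Finset.range (τ - s)).image (fun k => ((u, s + k), (u, s + k + 1)))

/-- The horizontal edges of the path at time `τ` from node `u` to node `w`. -/
def horizPath (τ u w : ℕ) : Finset GEdge :=
  (Finset.range (w - u)).image (fun k => ((u + k, τ), (u + k + 1, τ)))

/-- A directed path from `a` to `b` all of whose edges belong to `F`. -/
def PathIn (F : Finset GEdge) (a b : Replica) : Prop :=
  ∃ (L : ℕ) (f : ℕ → Replica), f 0 = a ∧ f L = b ∧ ∀ k < L, (f k, f (k + 1)) ∈ F

/-- An execution of Algorithm `Square` on a request sequence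
`r_1 = (v 1, t 1), …, r_N = (v N, t N)` (with `t 0 = 0` and nondecreasing times).
`sol i` is the edge set after handling request `i`; `ρ i` is the radius of
request `i`; `(u' i, s' i)` is its closest replica and `(us i, ss i)` its
serving replica.  The fields record the specification SQ1–SQ5. -/
structure SquareRun where
  N : ℕ
  v : ℕ → ℕ
  t : ℕ → ℕ
  ρ : ℕ → ℕ
  u' : ℕ → ℕ
  s' : ℕ → ℕ
  us : ℕ → ℕ
  ss : ℕ → ℕ
  sol : ℕ → Finset GEdge
  t_zero : t 0 = 0
  t_mono : ∀ i j, i ≤ j → j ≤ N → t i ≤ t j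
  sol_zero : sol 0 = ∅
  /-- SQ2: `ρ i` is a lower bound on the distance from every replica of the
  current solution (after the SQ1 additions) to `r_i`. -/
  rho_min : ∀ i, 1 ≤ i → i ≤ N →
    ∀ q ∈ Repl (sol (i - 1) ∪ vertPath 0 (t (i - 1)) (t i)),
      (ρ i : ℕ∞) ≤ distInf q (v i, t i)
  /-- SQ2: the closest replica belongs to the current solution. -/
  closest_mem : ∀ i, 1 ≤ i → i ≤ N →
    (u' i, s' i) ∈ Repl (sol (i - 1) ∪ vertPath 0 (t (i - 1)) (t i))
  /-- SQ2: the closest replica attains the radius. -/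
  closest_dist : ∀ i, 1 ≤ i → i ≤ N →
    distInf (u' i, s' i) (v i, t i) = (ρ i : ℕ∞)
  /-- SQ2: among replicas of node `u' i`, the closest replica is the latest. -/
  closest_late : ∀ i, 1 ≤ i → i ≤ N → ∀ s, s ≤ t i →
    (u' i, s) ∈ Repl (sol (i - 1) ∪ vertPath 0 (t (i - 1)) (t i)) → s ≤ s' i
  /-- SQ3: the serving replica is in the current solution and in `Sq(r_i, 5ρ i)`. -/
  serv_mem : ∀ i, 1 ≤ i → i ≤ N →
    (us i, ss i) ∈ Repl (sol (i - 1) ∪ vertPath 0 (t (i - 1)) (t i)) ∧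
      (us i, ss i) ∈ SqRect (v i, t i) (5 * ρ i)
  /-- SQ3: the serving node is leftmost. -/
  serv_min : ∀ i, 1 ≤ i → i ≤ N →
    ∀ q ∈ Repl (sol (i - 1) ∪ vertPath 0 (t (i - 1)) (t i)),
      q ∈ SqRect (v i, t i) (5 * ρ i) → us i ≤ q.1
  /-- SQ3: among those, the serving time is latest. -/
  serv_late : ∀ i, 1 ≤ i → i ≤ N →
    ∀ q ∈ Repl (sol (i - 1) ∪ vertPath 0 (t (i - 1)) (t i)),
      q ∈ SqRect (v i, t i) (5 * ρ i) → q.1 = us i → q.2 ≤ ss i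
  /-- SQ1 + SQ4 + SQ5: the edges added while handling request `i`. -/
  step : ∀ i, 1 ≤ i → i ≤ N →
    sol i = (sol (i - 1) ∪ vertPath 0 (t (i - 1)) (t i))
      ∪ vertPath (us i) (ss i) (t i) ∪ horizPath (t i) (us i) (v i)
      ∪ vertPath (us i) (t i) (t i + 4 * ρ i)

namespace SquareRun

variable (S : SquareRun)

/-- The `i`-th request replica. -/
def req (i : ℕ) : Replica := (S.v i, S.t i)

/-- The edges added in steps SQ4 and SQ5 while handling request `i`. -/
def added45 (i : ℕ) : Finset GEdge :=
  vertPath (S.us i) (S.ss i) (S.t i) ∪ horizPath (S.t i) (S.us i) (S.v i)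
    ∪ vertPath (S.us i) (S.t i) (S.t i + 4 * S.ρ i)

/-- Request `i` is covered if `v_i − u^s_i ≥ ρ(i)`. -/
def covered (i : ℕ) : Prop := S.ρ i ≤ S.v i - S.us i

def uncovered (i : ℕ) : Prop := ¬ S.covered i

/-- A feasible solution of the DMCD instance given by the requests of `S`. -/
def Feasible (F : Finset GEdge) : Prop :=
  (∀ e ∈ F, isGridEdge e) ∧
  (∀ i, 1 ≤ i → i ≤ S.N → PathIn F (0, 0) (S.req i)) ∧
  (∀ τ, τ < S.t S.N → ∃ w, ((w, τ), (w, τ + 1)) ∈ F)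

/-- `S.IsParent i j` means `parent(j) = i`:  `i` is the least index greater than
`j` such that `r_i` is uncovered and `SQball(j)`, `SQball(i)` are not
edge-disjoint. -/
def IsParent (i j : ℕ) : Prop :=
  1 ≤ j ∧ j < i ∧ i ≤ S.N ∧ S.uncovered j ∧ S.uncovered i ∧
    ¬ BallsEdgeDisjoint (S.req j) (S.ρ j) (S.req i) (S.ρ i) ∧
    ∀ k, j < k → k < i → S.uncovered k →
      BallsEdgeDisjoint (S.req j) (S.ρ j) (S.req k) (S.ρ k)

/-- A root: an uncovered request with no parent. -/
def IsRoot (i : ℕ) : Prop :=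
  1 ≤ i ∧ i ≤ S.N ∧ S.uncovered i ∧
    ∀ j, i < j → j ≤ S.N → S.uncovered j →
      BallsEdgeDisjoint (S.req i) (S.ρ i) (S.req j) (S.ρ j)

/-- `i ∈ Tree(iStar)`: one can go from `i` to `iStar` by repeatedly passing from
a child to its parent. -/
def InTree (i iStar : ℕ) : Prop :=
  Relation.ReflTransGen (fun a b => S.IsParent b a) i iStar

end SquareRun

namespace SquareRun

variable (S : SquareRun)

theorem repl_union (A B : Finset GEdge) (q : Replica) :
    q ∈ Repl (A ∪ B) ↔ q ∈ Repl A ∨ q ∈ Repl B := by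
  simp only [Repl, Set.mem_insert_iff, Set.mem_ofPred_eq, Finset.mem_union]
  constructor
  · rintro (h | ⟨e, he | he, h⟩)
    · exact Or.inl (Or.inl h)
    · exact Or.inl (Or.inr ⟨e, he, h⟩)
    · exact Or.inr (Or.inr ⟨e, he, h⟩)
  · rintro ((h | ⟨e, he, h⟩) | (h | ⟨e, he, h⟩))
    · exact Or.inl h
    · exact Or.inr ⟨e, Or.inl he, h⟩
    · exact Or.inl h
    · exact Or.inr ⟨e, Or.inr he, h⟩

theorem repl_vert (u s τ a b : ℕ) :
    (a, b) ∈ Repl (vertPath u s τ) ↔ (a = 0 ∧ b = 0) ∨ (s < τ ∧ a = u ∧ s ≤ b ∧ b ≤ τ) := by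
  simp only [Repl, Set.mem_insert_iff, Set.mem_ofPred_eq, vertPath, Finset.mem_image,
    Finset.mem_range, Prod.mk.injEq]
  constructor
  · rintro (h | ⟨e, ⟨k, hk, rfl⟩, h⟩)
    · exact Or.inl h
    · right
      simp only [Prod.mk.injEq] at h
      omega
  · rintro (h | ⟨h1, h2, h3, h4⟩)
    · exact Or.inl h
    · right
      by_cases hb : b < τ
      · refine ⟨_, ⟨b - s, by omega, rfl⟩, Or.inl ?_⟩
        simp only [Prod.mk.injEq]
        omega
      · refine ⟨_, ⟨b - s - 1, by omega, rfl⟩, Or.inr ?_⟩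
        simp only [Prod.mk.injEq]
        omega

theorem repl_horiz (u w τ a b : ℕ) :
    (a, b) ∈ Repl (horizPath τ u w) ↔ (a = 0 ∧ b = 0) ∨ (u < w ∧ b = τ ∧ u ≤ a ∧ a ≤ w) := by
  simp only [Repl, Set.mem_insert_iff, Set.mem_ofPred_eq, horizPath, Finset.mem_image,
    Finset.mem_range, Prod.mk.injEq]
  constructor
  · rintro (h | ⟨e, ⟨k, hk, rfl⟩, h⟩)
    · exact Or.inl h
    · right
      simp only [Prod.mk.injEq] at h
      omega
  · rintro (h | ⟨h1, h2, h3, h4⟩)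
    · exact Or.inl h
    · right
      by_cases hb : a < w
      · refine ⟨_, ⟨a - u, by omega, rfl⟩, Or.inl ?_⟩
        simp only [Prod.mk.injEq]
        omega
      · refine ⟨_, ⟨a - u - 1, by omega, rfl⟩, Or.inr ?_⟩
        simp only [Prod.mk.injEq]
        omega

/-- Membership of a replica in the solution after step `l`. -/
def M (l u s : ℕ) : Prop := (u, s) ∈ Repl (S.sol l)

theorem cur_iff {l u s : ℕ} (hu : 0 < u) :
    (u, s) ∈ Repl (S.sol (l - 1) ∪ vertPath 0 (S.t (l - 1)) (S.t l)) ↔ S.M (l - 1) u s := by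
  rw [repl_union, repl_vert]
  unfold M
  constructor
  · rintro (h | h)
    · exact h
    · omega
  · exact Or.inl

theorem serv_sq {l : ℕ} (h1 : 1 ≤ l) (hN : l ≤ S.N) :
    S.us l ≤ S.v l ∧ S.ss l ≤ S.t l ∧ S.v l ≤ S.us l + 5 * S.ρ l ∧
      S.t l ≤ S.ss l + 5 * S.ρ l := by
  have h := (S.serv_mem l h1 hN).2
  simp only [SqRect, Set.mem_ofPred_eq] at h
  omega

theorem serv_M {l : ℕ} (h1 : 1 ≤ l) (hN : l ≤ S.N) (hu : 0 < S.us l) :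
    S.M (l - 1) (S.us l) (S.ss l) :=
  (S.cur_iff hu).1 (S.serv_mem l h1 hN).1

theorem M_step {l u s : ℕ} (h1 : 1 ≤ l) (hN : l ≤ S.N) (hu : 0 < u) :
    S.M l u s ↔ S.M (l - 1) u s ∨
      (u = S.us l ∧ S.ss l ≤ s ∧ s ≤ S.t l + 4 * S.ρ l) ∨
      (S.us l ≤ u ∧ u ≤ S.v l ∧ s = S.t l) := by
  have hsq := S.serv_sq h1 hN
  have key : S.M l u s ↔ ((S.M (l - 1) u s ∨
      (u, s) ∈ Repl (vertPath (S.us l) (S.ss l) (S.t l))) ∨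
      (u, s) ∈ Repl (horizPath (S.t l) (S.us l) (S.v l))) ∨
      (u, s) ∈ Repl (vertPath (S.us l) (S.t l) (S.t l + 4 * S.ρ l)) := by
    rw [← S.cur_iff hu]
    unfold M
    rw [S.step l h1 hN, repl_union, repl_union, repl_union]
  rw [key, repl_vert, repl_vert, repl_horiz]
  constructor
  · rintro (((h | h) | h) | h)
    · exact Or.inl h
    · right; left; omega
    · right; right; omega
    · right; left; omega
  · have hs : u = S.us l → s = S.ss l → S.M (l - 1) u s := by
      rintro h rfl
      have := S.serv_M h1 hN (by omega)
      rwa [← h] at this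
    rintro (h | h | h)
    · exact Or.inl (Or.inl (Or.inl h))
    · by_cases hh : s = S.ss l
      · exact Or.inl (Or.inl (Or.inl (hs h.1 hh)))
      · by_cases h2 : s ≤ S.t l
        · left; left; right; right; omega
        · right; right; omega
    · by_cases h3 : S.us l < S.v l
      · left; right; right; omega
      · by_cases hh : s = S.ss l
        · exact Or.inl (Or.inl (Or.inl (hs (by omega) hh)))
        · left; left; right; right; omega

theorem M_mono {l l' u s : ℕ} (hu : 0 < u) (hl : l ≤ l') (hN : l' ≤ S.N) (h : S.M l u s) :
    S.M l' u s := by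
  induction l', hl using Nat.le_induction with
  | base => exact h
  | succ n hn ih =>
    rw [S.M_step (by omega) hN hu]
    exact Or.inl (ih (by omega))

theorem M_zero {u s : ℕ} (hu : 0 < u) : ¬ S.M 0 u s := by
  unfold M
  rw [S.sol_zero]
  simp [Repl]
  omega

theorem M_future {l u s τ : ℕ} (hu : 0 < u) (hN : l ≤ S.N) (h : S.M l u s)
    (h1 : S.t l ≤ τ) (h2 : τ ≤ s) : S.M l u τ := by
  induction l with
  | zero => exact absurd h (S.M_zero hu)
  | succ n ih =>
    have hm := S.t_mono n (n + 1) (by omega) hN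
    have hsq := S.serv_sq (l := n + 1) (by omega) hN
    rw [S.M_step (by omega) hN hu] at h ⊢
    rcases h with h | h | h
    · exact Or.inl (ih (by omega) h (by omega))
    · right; left; omega
    · right; right; omega

theorem rho_min' {l u s : ℕ} (h1 : 1 ≤ l) (hN : l ≤ S.N) (hu : 0 < u) (hv : u ≤ S.v l)
    (hs : s ≤ S.t l) (h : S.M (l - 1) u s) :
    S.ρ l + u ≤ S.v l ∨ S.ρ l + s ≤ S.t l ∨ S.ρ l = 0 := by
  have := S.rho_min l h1 hN _ ((S.cur_iff hu).2 h)
  simp only [distInf, hv, hs, and_self, if_true, Nat.cast_le] at this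
  omega

theorem zero_mem {l : ℕ} (hN : l ≤ S.N) : (0, S.t l) ∈ Repl (S.sol l) := by
  induction l with
  | zero => rw [S.t_zero]; simp [Repl]
  | succ n ih =>
    have hm := S.t_mono n (n + 1) (by omega) hN
    rw [S.step _ (by omega) hN, repl_union, repl_union, repl_union, repl_union]
    refine Or.inl (Or.inl (Or.inl ?_))
    simp only [Nat.add_sub_cancel]
    by_cases h : S.t n = S.t (n + 1)
    · left; rw [← h]; exact ih (by omega)
    · right; rw [repl_vert]; right; omega

theorem rho_le {l : ℕ} (h1 : 1 ≤ l) (hN : l ≤ S.N) : S.ρ l ≤ S.v l := by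
  have hm := S.t_mono (l - 1) l (by omega) hN
  have : (0, S.t l) ∈ Repl (S.sol (l - 1) ∪ vertPath 0 (S.t (l - 1)) (S.t l)) := by
    rw [repl_union]
    by_cases h : S.t (l - 1) = S.t l
    · left; rw [← h]; exact S.zero_mem (by omega)
    · right; rw [repl_vert]; right; omega
  have := S.rho_min l h1 hN _ this
  simp [distInf] at this
  exact this

theorem us_pos {l : ℕ} (h1 : 1 ≤ l) (hN : l ≤ S.N) (h : S.uncovered l) :
    0 < S.us l ∧ S.v l < S.us l + S.ρ l ∧ 0 < S.ρ l := by
  have := S.rho_le h1 hN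
  unfold uncovered covered at h
  omega

theorem serv_min' {l u s : ℕ} (h1 : 1 ≤ l) (hN : l ≤ S.N) (hu : 0 < u) (h : S.M (l - 1) u s)
    (a : u ≤ S.v l) (b : S.v l ≤ u + 5 * S.ρ l) (c : s ≤ S.t l) (d : S.t l ≤ s + 5 * S.ρ l) :
    S.us l ≤ u := by
  refine S.serv_min l h1 hN _ ((S.cur_iff hu).2 h) ?_
  simp only [SqRect, Set.mem_ofPred_eq]
  omega

theorem serv_late' {l s : ℕ} (h1 : 1 ≤ l) (hN : l ≤ S.N) (hu : 0 < S.us l)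
    (h : S.M (l - 1) (S.us l) s) (c : s ≤ S.t l) : s ≤ S.ss l := by
  by_contra hc
  have hsq := S.serv_sq h1 hN
  apply hc
  refine S.serv_late l h1 hN _ ((S.cur_iff hu).2 h) ?_ rfl
  simp only [SqRect, Set.mem_ofPred_eq]
  omega

theorem closest {l : ℕ} (h1 : 1 ≤ l) (hN : l ≤ S.N) (h : S.uncovered l) :
    ∃ u s, S.M (l - 1) u s ∧ S.us l ≤ u ∧ u ≤ S.v l ∧ s + S.ρ l = S.t l := by
  have hp := S.us_pos h1 hN h
  have hd := S.closest_dist l h1 hN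
  have hm := S.closest_mem l h1 hN
  unfold distInf at hd
  split_ifs at hd with hc
  · simp only [Nat.cast_inj] at hd
    simp only at hc
    have hus : S.us l ≤ S.u' l := by
      refine S.serv_min l h1 hN _ hm ?_
      simp only [SqRect, Set.mem_ofPred_eq]
      omega
    exact ⟨_, _, (S.cur_iff (by omega)).1 hm, hus, hc.1, by omega⟩
  · exact absurd hd (by simp)

theorem trace {l0 l u s : ℕ} (hu : 0 < u) (hl : l0 ≤ l) (hN : l ≤ S.N) (h : S.M l u s) :
    S.M l0 u s ∨ ∃ k, l0 < k ∧ k ≤ l ∧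
      ((u = S.us k ∧ S.ss k ≤ s ∧ s ≤ S.t k + 4 * S.ρ k) ∨
      (S.us k ≤ u ∧ u ≤ S.v k ∧ s = S.t k)) := by
  induction l, hl using Nat.le_induction with
  | base => exact Or.inl h
  | succ n hn ih =>
    rw [S.M_step (by omega) hN hu] at h
    rcases h with h | h
    · rcases ih (by omega) h with h | ⟨k, a, b, c⟩
      · exact Or.inl h
      · exact Or.inr ⟨k, a, by omega, c⟩
    · exact Or.inr ⟨n + 1, by omega, le_rfl, h⟩

theorem overlap {i j : ℕ} (h : S.IsParent i j) :
    S.v i < S.us j ∧ S.v j ≤ S.v i + S.ρ j ∧ S.t i < S.t j + S.ρ i ∧ S.t j ≤ S.t i := by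
  obtain ⟨h1, hji, hN, hj, hi, hb, -⟩ := h
  have ht := S.t_mono j i (by omega) hN
  have hpj := S.us_pos h1 (by omega) hj
  have hpi := S.us_pos (by omega) hN hi
  have hsq := S.serv_sq h1 (by omega)
  unfold BallsEdgeDisjoint at hb
  push Not at hb
  obtain ⟨⟨⟨x, y⟩, ⟨x', y'⟩⟩, ⟨hg, ha, hb⟩, ⟨-, hc, hd⟩⟩ := hb
  simp only [isGridEdge, isHoriz, isArc, qball, req, Set.mem_ofPred_eq, Prod.mk.injEq]
    at hg ha hb hc hd
  have claim : ∀ w, S.us j ≤ w → w ≤ S.v j → w ≤ S.v i →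
      S.ρ i + w ≤ S.v i ∨ S.ρ i + S.t j ≤ S.t i ∨ S.ρ i = 0 := by
    intro w a b c
    refine S.rho_min' (by omega) hN (by omega) c ht ?_
    refine S.M_mono (l := j) (by omega) (by omega) (by omega) ?_
    rw [S.M_step h1 (by omega) (by omega)]
    right; right; omega
  have hlt : S.v i < S.us j := by
    by_contra hcon
    by_cases hv : S.v j ≤ S.v i
    · have := claim (S.v j) (by omega) le_rfl hv
      omega
    · have := claim (S.v i) (by omega) (by omega) le_rfl
      omega
  omega

theorem not_sq {i j u s : ℕ} (h : S.IsParent i j) (hu : 0 < u) (huj : u < S.us j)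
    (hM : S.M (j - 1) u s) (hs : s ≤ S.t j) (hv : S.v j ≤ u + 5 * S.ρ j) :
    s + 5 * S.ρ j < S.t j := by
  by_contra hc
  have hsq := S.serv_sq (l := j) h.1 (by have := h.2.1; have := h.2.2.1; omega)
  have := S.serv_min' (l := j) h.1 (by have := h.2.1; have := h.2.2.1; omega) hu hM
    (by omega) hv hs (by omega)
  omega

/-- A latest-on-its-column replica from before time `t j` was there before step `j`. -/
theorem old {i j l u s : ℕ} (h : S.IsParent i j) (hjl : j < l) (hl : l ≤ i) (hu : 0 < u)
    (huj : u < S.us j) (hM : S.M (l - 1) u s) (hs : s < S.t j)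
    (hlate : ∀ τ, S.t j ≤ τ → τ ≤ S.t l → ¬ S.M (l - 1) u τ) : S.M (j - 1) u s := by
  obtain ⟨h1, hji, hN, -⟩ := h
  rcases S.trace (l0 := j) hu (by omega) (by omega) hM with hM | ⟨k, a, b, c⟩
  · rw [S.M_step h1 (by omega) hu] at hM
    have hsq := S.serv_sq h1 (by omega : j ≤ S.N)
    rcases hM with hM | hM | hM
    · exact hM
    · omega
    · omega
  · exfalso
    have t1 := S.t_mono j k (by omega) (by omega)
    have t2 := S.t_mono k l (by omega) (by omega)
    have hsq := S.serv_sq (l := k) (by omega) (by omega)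
    rcases c with c | c
    · refine hlate (S.t k) t1 t2 (S.M_mono (l := k) hu (by omega) (by omega) ?_)
      rw [S.M_step (by omega) (by omega) hu]
      right; left; omega
    · omega

theorem quarter {i j : ℕ} (h : S.IsParent i j) : 4 * S.ρ j ≤ S.ρ i := by
  have ho := S.overlap h
  obtain ⟨h1, hji, hN, hj, hi, -⟩ := id h
  have hpi := S.us_pos (by omega) hN hi
  obtain ⟨u, s, hM, a, b, c⟩ := S.closest (by omega) hN hi
  have hold := S.old h hji le_rfl (by omega) (by omega) hM (by omega) (by
    intro τ x y hτ
    have := S.rho_min' (by omega) hN (by omega) b y hτ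
    omega)
  by_contra hc
  have := S.not_sq h (by omega) (by omega) hold (by omega) (by omega)
  omega

theorem column {i j : ℕ} (h : S.IsParent i j) {l : ℕ} (hjl : j ≤ l) (hli : l < i) :
    ∀ u s, S.M l u s → S.v i < u → u < S.us j → S.t j ≤ s →
      ∃ w, S.v i < w ∧ w ≤ u ∧ ∀ τ, S.t j ≤ τ → τ ≤ S.t j + 4 * S.ρ j → S.M l w τ := by
  have ho := S.overlap h
  obtain ⟨h1, hji, hN, hj, hi, -⟩ := id h
  have hpi := S.us_pos (by omega) hN hi
  have hsqi := S.serv_sq (by omega) hN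
  induction l, hjl using Nat.le_induction with
  | base =>
    intro u s hM a b c
    exfalso
    rw [S.M_step h1 (by omega) (by omega)] at hM
    rcases hM with hM | hM | hM
    · have hm := S.t_mono (j - 1) j (by omega) (by omega)
      have := S.not_sq h (by omega) b (S.M_future (by omega) (by omega) hM hm c) le_rfl (by omega)
      omega
    · omega
    · omega
  | succ n hn ih =>
    intro u s hM a b c
    have ih := ih (by omega)
    have t1 := S.t_mono j (n + 1) (by omega) (by omega)
    have t2 := S.t_mono (n + 1) i (by omega) (by omega)
    have lift : ∀ u' s', S.M n u' s' → S.v i < u' → u' ≤ u → S.t j ≤ s' →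
      ∃ w, S.v i < w ∧ w ≤ u ∧
        ∀ τ, S.t j ≤ τ → τ ≤ S.t j + 4 * S.ρ j → S.M (n + 1) w τ := by
      intro u' s' hM' x y z
      obtain ⟨w, w1, w2, w3⟩ := ih u' s' hM' x (by omega) z
      exact ⟨w, w1, by omega, fun τ p q =>
        S.M_mono (l := n) (by omega) (by omega) (by omega) (w3 τ p q)⟩
    rw [S.M_step (by omega) (by omega) (by omega)] at hM
    rcases hM with hM | hM
    · exact lift u s hM a le_rfl c
    · have hus : S.v i < S.us (n + 1) := by
        by_contra hc
        have hMi : S.M (i - 1) (S.v i) (S.t (n + 1)) := by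
          refine S.M_mono (l := n + 1) (by omega) (by omega) (by omega) ?_
          rw [S.M_step (by omega) (by omega) (by omega)]
          right; right; omega
        have := S.rho_min' (by omega) hN (by omega) le_rfl t2 hMi
        omega
      have hus2 : S.us (n + 1) ≤ u := by omega
      have hMs := S.serv_M (l := n + 1) (by omega) (by omega) (by omega)
      have hsq := S.serv_sq (l := n + 1) (by omega) (by omega)
      by_cases hss : S.t j ≤ S.ss (n + 1)
      · exact lift _ _ hMs hus hus2 hss
      · have hold := S.old h (l := n + 1) (by omega) (by omega) (by omega) (by omega) hMs
          (by omega) (by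
            intro τ x y hτ
            have := S.serv_late' (by omega) (by omega) (by omega) hτ y
            omega)
        have hns := S.not_sq h (by omega) (by omega) hold (by omega) (by omega)
        refine ⟨S.us (n + 1), hus, hus2, fun τ p q => ?_⟩
        rw [S.M_step (by omega) (by omega) (by omega)]
        right; left; omega

theorem sibling {i j k : ℕ} (hj : S.IsParent i j) (hk : S.IsParent i k) (hjk : j < k) :
    S.t j + 4 * S.ρ j + S.ρ k ≤ S.t k := by
  have oj := S.overlap hj
  have ok := S.overlap hk
  obtain ⟨hk1, hki, hN, hku, hiu, -, -⟩ := id hk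
  obtain ⟨hj1, hji, -, hju, -, -, hdis⟩ := id hj
  have hd := hdis k hjk hki hku
  have hpk := S.us_pos hk1 (by omega) hku
  have sj := S.serv_sq hj1 (by omega)
  have sk := S.serv_sq hk1 (by omega)
  have tjk := S.t_mono j k (by omega) (by omega)
  have main : ∃ w, S.v i < w ∧ w ≤ S.v k ∧
      ∀ τ, S.t j ≤ τ → τ ≤ S.t j + 4 * S.ρ j → S.M (k - 1) w τ := by
    by_cases hv : S.us j ≤ S.v k
    · refine ⟨S.us j, oj.1, hv, fun τ p q => ?_⟩
      refine S.M_mono (l := j) (by omega) (by omega) (by omega) ?_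
      rw [S.M_step hj1 (by omega) (by omega)]
      right; left; omega
    · obtain ⟨u, s, hM, a, b, c⟩ := S.closest hk1 (by omega) hku
      by_cases hs : S.t j ≤ s
      · obtain ⟨w, w1, w2, w3⟩ := S.column hj (l := k - 1) (by omega) (by omega) u s hM
          (by omega) (by omega) hs
        exact ⟨w, w1, by omega, w3⟩
      · exfalso
        have hold := S.old hj (l := k) hjk (by omega) (by omega) (by omega) hM (by omega) (by
          intro τ x y hτ
          have := S.rho_min' hk1 (by omega) (by omega) b y hτ
          omega)
        have hns := S.not_sq hj (by omega) (by omega) hold (by omega) (by omega)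
        refine hd ((S.v i, S.t j), (S.v i + 1, S.t j)) ?_
        simp only [ballEdge, isGridEdge, isHoriz, isArc, qball, req, Set.mem_ofPred_eq,
          Prod.mk.injEq]
        refine ⟨⟨Or.inl trivial, ?_, ?_⟩, ⟨Or.inl trivial, ?_, ?_⟩⟩ <;> omega
  obtain ⟨w, w1, w2, w3⟩ := main
  by_cases hτ : S.t j + 4 * S.ρ j ≤ S.t k
  · have := S.rho_min' hk1 (by omega) (by omega) w2 hτ (w3 _ (by omega) le_rfl)
    omega
  · have := S.rho_min' hk1 (by omega) (by omega) w2 le_rfl (w3 (S.t k) (by omega) (by omega))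
    omega

theorem suns_aux {i : ℕ} (C : Finset ℕ) : (∀ j ∈ C, S.IsParent i j) →
    ∀ x, (∀ j ∈ C, S.t j + 4 * S.ρ j ≤ x) → S.t i ≤ x + S.ρ i →
      4 * ∑ j ∈ C, S.ρ j + S.t i ≤ x + S.ρ i := by
  induction C using Finset.induction_on_max with
  | empty => intro _ x _ h; simpa using h
  | insert m C hlt ih =>
    intro hC x hx h
    have hm := hC m (Finset.mem_insert_self _ _)
    have om := S.overlap hm
    have := ih (fun j hj => hC j (Finset.mem_insert_of_mem hj)) (S.t m) (fun j hj => by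
      have := S.sibling (hC j (Finset.mem_insert_of_mem hj)) hm (hlt j hj)
      omega) (by omega)
    rw [Finset.sum_insert (fun hmem => lt_irrefl _ (hlt m hmem))]
    have := hx m (Finset.mem_insert_self _ _)
    omega

theorem suns_sum {i : ℕ} (C : Finset ℕ) (hC : ∀ j ∈ C, S.IsParent i j) :
    2 * ∑ j ∈ C, S.ρ j ≤ S.ρ i := by
  have := S.suns_aux C hC (S.t i + S.ρ i) (fun j hj => by
    have := S.overlap (hC j hj)
    have := S.quarter (hC j hj)
    omega) (by omega)
  omega

open Classical in
theorem tree_aux (i : ℕ) : ∀ T : Finset ℕ, (∀ x ∈ T, S.InTree x i) →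
    ∑ x ∈ T, S.ρ x ≤ 2 * S.ρ i := by
  induction i using Nat.strong_induction_on with
  | _ i ih =>
    intro T hT
    let C := (Finset.range i).filter (fun c => S.IsParent i c)
    have hC : ∀ j ∈ C, S.IsParent i j := fun j hj => (Finset.mem_filter.1 hj).2
    have hsub : T ⊆ {i} ∪ C.biUnion (fun c => T.filter (fun x => S.InTree x c)) := by
      intro x hx
      rw [Finset.mem_union, Finset.mem_singleton, Finset.mem_biUnion]
      rcases Relation.ReflTransGen.cases_tail (hT x hx) with h | ⟨c, h, hp⟩
      · exact Or.inl h.symm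
      · exact Or.inr ⟨c, Finset.mem_filter.2 ⟨Finset.mem_range.2 hp.2.1, hp⟩,
          Finset.mem_filter.2 ⟨hx, h⟩⟩
    have hbi : ∀ D : Finset ℕ, D ⊆ C →
        ∑ x ∈ D.biUnion (fun c => T.filter (fun x => S.InTree x c)), S.ρ x
          ≤ ∑ c ∈ D, 2 * S.ρ c := by
      intro D
      induction D using Finset.induction_on with
      | empty => simp
      | insert a D ha ihD =>
        intro hD
        rw [Finset.biUnion_insert, Finset.sum_insert ha]
        have h1 := ihD (fun x hx => hD (Finset.mem_insert_of_mem hx))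
        have ha' := hC a (hD (Finset.mem_insert_self _ _))
        have h2 := ih a ha'.2.1 (T.filter (fun x => S.InTree x a))
          (fun x hx => (Finset.mem_filter.1 hx).2)
        have h3 := Finset.sum_union_inter (s₁ := T.filter (fun x => S.InTree x a))
          (s₂ := D.biUnion (fun c => T.filter (fun x => S.InTree x c))) (f := S.ρ)
        omega
    have h1 := hbi C (Finset.Subset.refl _)
    rw [← Finset.mul_sum] at h1
    have h2 := S.suns_sum C hC
    have h3 := Finset.sum_le_sum_of_subset (f := S.ρ) hsub
    have h4 := Finset.sum_union_inter (s₁ := {i})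
      (s₂ := C.biUnion (fun c => T.filter (fun x => S.InTree x c))) (f := S.ρ)
    rw [Finset.sum_singleton] at h4
    omega

end SquareRun

/-- For every root request `i*`, the sum of the radii over its tree is at most
twice its own radius: `Σ_{i∈Tree(i*)} ρ(i) ≤ 2·ρ(i*)`. -/
theorem tree_radii_le_twice_root (S : SquareRun) (iStar : ℕ)
    (hroot : S.IsRoot iStar) (T : Finset ℕ)
    (hT : ∀ i, i ∈ T ↔ S.InTree i iStar) :
    ∑ i ∈ T, S.ρ i ≤ 2 * S.ρ iStar := by
  exact S.tree_aux iStar T (fun x hx => (hT x).1 hx)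
end

section
/- Algorithm Square is O(1)-competitive: there exists an absolute constant c (independent of the request sequence) such that for every request sequence R, cost(Square,R) ≤ c·|opt|. -/
open Finset

namespace SQ

lemma mem_vertPath {u s τ : ℕ} {e : GEdge} :
    e ∈ vertPath u s τ ↔ ∃ x, s ≤ x ∧ x < τ ∧ e = ((u, x), (u, x + 1)) := by
  unfold vertPath
  simp only [Finset.mem_image, Finset.mem_range]
  constructor
  · rintro ⟨k, hk, rfl⟩
    exact ⟨s + k, by omega, by omega, rfl⟩
  · rintro ⟨x, h1, h2, rfl⟩
    refine ⟨x - s, by omega, ?_⟩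
    have : s + (x - s) = x := by omega
    rw [this]

lemma mem_horizPath {τ u w : ℕ} {e : GEdge} :
    e ∈ horizPath τ u w ↔ ∃ x, u ≤ x ∧ x < w ∧ e = ((x, τ), (x + 1, τ)) := by
  unfold horizPath
  simp only [Finset.mem_image, Finset.mem_range]
  constructor
  · rintro ⟨k, hk, rfl⟩
    exact ⟨u + k, by omega, by omega, rfl⟩
  · rintro ⟨x, h1, h2, rfl⟩
    refine ⟨x - u, by omega, ?_⟩
    have : u + (x - u) = x := by omega
    rw [this]

lemma Repl_mono {A B : Finset GEdge} (h : A ⊆ B) : Repl A ⊆ Repl B := by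
  rintro q (rfl | ⟨e, he, hq⟩)
  · exact Or.inl rfl
  · exact Or.inr ⟨e, h he, hq⟩

lemma mem_Repl_fst {A : Finset GEdge} {p q : Replica} (h : (p, q) ∈ A) : p ∈ Repl A :=
  Or.inr ⟨_, h, Or.inl rfl⟩

lemma mem_Repl_snd {A : Finset GEdge} {p q : Replica} (h : (p, q) ∈ A) : q ∈ Repl A :=
  Or.inr ⟨_, h, Or.inr rfl⟩

variable (S : SquareRun)

/-- current solution when handling `i`, after SQ1 -/
def cur (i : ℕ) : Finset GEdge := S.sol (i - 1) ∪ vertPath 0 (S.t (i - 1)) (S.t i)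

lemma cur_sub {i : ℕ} (h1 : 1 ≤ i) (h2 : i ≤ S.N) : cur S i ⊆ S.sol i := by
  rw [S.step i h1 h2]
  intro e he
  simp only [Finset.mem_union]
  exact Or.inl (Or.inl (Or.inl (Finset.mem_union.1 he)))

lemma prev_sub_cur (i : ℕ) : S.sol (i - 1) ⊆ cur S i := Finset.subset_union_left

lemma sol_mono {m n : ℕ} (h : m ≤ n) (hn : n ≤ S.N) : S.sol m ⊆ S.sol n := by
  induction n, h using Nat.le_induction with
  | base => exact fun _ h => h
  | succ n hmn ih =>
    have := (prev_sub_cur S (n + 1)).trans (cur_sub S (by omega) hn)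
    exact (ih (by omega)).trans this

lemma mem_cur_nz {i u s : ℕ} (hu : u ≠ 0) (h : (u, s) ∈ Repl (cur S i)) :
    (u, s) ∈ Repl (S.sol (i - 1)) := by
  rcases h with h | ⟨e, he, hq⟩
  · exact absurd (congrArg Prod.fst h) hu
  · rcases Finset.mem_union.1 he with he | he
    · exact Or.inr ⟨e, he, hq⟩
    · obtain ⟨x, _, _, rfl⟩ := mem_vertPath.1 he
      rcases hq with hq | hq <;> exact absurd (congrArg Prod.fst hq) hu

lemma zero_mem (n : ℕ) (hn : n ≤ S.N) : ((0, S.t n) : Replica) ∈ Repl (S.sol n) := by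
  induction n with
  | zero => rw [S.t_zero]; exact Or.inl rfl
  | succ n ih =>
    have hm := S.t_mono n (n + 1) (by omega) hn
    rcases Nat.eq_or_lt_of_le hm with h | h
    · rw [← h]
      exact Repl_mono (sol_mono S (by omega) hn) (ih (by omega))
    · refine Repl_mono (cur_sub S (by omega) hn) ?_
      refine mem_Repl_snd (p := (0, S.t (n + 1) - 1)) (Finset.mem_union_right _ ?_)
      refine mem_vertPath.2 ⟨S.t (n + 1) - 1, ?_, by omega, ?_⟩
      · simp only [Nat.add_sub_cancel]; omega
      · have : S.t (n + 1) - 1 + 1 = S.t (n + 1) := by omega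
        rw [this]

lemma zero_mem_cur {i : ℕ} (h1 : 1 ≤ i) (hn : i ≤ S.N) : ((0, S.t i) : Replica) ∈ Repl (cur S i) := by
  have hm := S.t_mono (i - 1) i (by omega) hn
  rcases Nat.eq_or_lt_of_le hm with h | h
  · rw [← h]
    exact Repl_mono (prev_sub_cur S i) (zero_mem S _ (by omega))
  · refine mem_Repl_snd (p := (0, S.t i - 1)) (Finset.mem_union_right _ ?_)
    refine mem_vertPath.2 ⟨S.t i - 1, by omega, by omega, ?_⟩
    have : S.t i - 1 + 1 = S.t i := by omega
    rw [this]

/-- basic facts on the serving replica -/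
lemma serv {i : ℕ} (h1 : 1 ≤ i) (hn : i ≤ S.N) :
    (S.us i, S.ss i) ∈ Repl (cur S i) ∧ S.v i ≤ S.us i + 5 * S.ρ i ∧ S.us i ≤ S.v i ∧
      S.t i ≤ S.ss i + 5 * S.ρ i ∧ S.ss i ≤ S.t i := by
  obtain ⟨h, a, b, c, d⟩ := S.serv_mem i h1 hn
  simp only at a b c d
  exact ⟨h, by omega, by omega, by omega, by omega⟩

lemma vert_mem {i τ : ℕ} (h1 : 1 ≤ i) (hn : i ≤ S.N) (ha : S.ss i ≤ τ)
    (hb : τ ≤ S.t i + 4 * S.ρ i) : (S.us i, τ) ∈ Repl (S.sol i) := by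
  obtain ⟨h, -, -, -, hst⟩ := serv S h1 hn
  rcases Nat.eq_or_lt_of_le ha with h' | h'
  · rw [← h']; exact Repl_mono (cur_sub S h1 hn) h
  · refine mem_Repl_snd (p := (S.us i, τ - 1)) ?_
    have e : τ - 1 + 1 = τ := by omega
    rw [S.step i h1 hn]
    simp only [Finset.mem_union]
    by_cases hc : τ ≤ S.t i
    · exact Or.inl (Or.inl (Or.inr (mem_vertPath.2 ⟨τ - 1, by omega, by omega, by rw [e]⟩)))
    · exact Or.inr (mem_vertPath.2 ⟨τ - 1, by omega, by omega, by rw [e]⟩)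

lemma horiz_mem {i w : ℕ} (h1 : 1 ≤ i) (hn : i ≤ S.N) (ha : S.us i ≤ w)
    (hb : w ≤ S.v i) : (w, S.t i) ∈ Repl (S.sol i) := by
  obtain ⟨h, -, -, -, hst⟩ := serv S h1 hn
  rcases Nat.eq_or_lt_of_le ha with h' | h'
  · rw [← h']; exact vert_mem S h1 hn hst (by omega)
  · refine mem_Repl_snd (p := (w - 1, S.t i)) ?_
    have e : w - 1 + 1 = w := by omega
    rw [S.step i h1 hn]
    simp only [Finset.mem_union]
    exact Or.inl (Or.inr (mem_horizPath.2 ⟨w - 1, by omega, by omega, by rw [e]⟩))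

lemma origin {u s m n : ℕ} (hu : u ≠ 0) (hmn : m ≤ n) (hn : n ≤ S.N)
    (h : (u, s) ∈ Repl (S.sol n)) :
    (u, s) ∈ Repl (S.sol m) ∨ ∃ l, m < l ∧ l ≤ n ∧ S.us l ≤ u ∧ u ≤ S.v l ∧
      (s = S.t l ∨ (u = S.us l ∧ S.ss l ≤ s ∧ s ≤ S.t l + 4 * S.ρ l)) := by
  induction n, hmn using Nat.le_induction with
  | base => exact Or.inl h
  | succ n hmn ih =>
    have key : (u, s) ∈ Repl (S.sol n) ∨ (S.us (n + 1) ≤ u ∧ u ≤ S.v (n + 1) ∧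
      (s = S.t (n + 1) ∨ (u = S.us (n + 1) ∧ S.ss (n + 1) ≤ s ∧
        s ≤ S.t (n + 1) + 4 * S.ρ (n + 1)))) := by
      obtain ⟨-, -, huv, -, hst⟩ := serv S (i := n + 1) (by omega) hn
      rcases h with h | ⟨e, he, hq⟩
      · exact absurd (congrArg Prod.fst h) hu
      · rw [S.step (n + 1) (by omega) hn] at he
        simp only [Finset.mem_union] at he
        rcases he with ((he | he) | he) | he
        · left
          exact mem_cur_nz S (i := n + 1) hu (Or.inr ⟨e, Finset.mem_union.2 he, hq⟩)
        · right
          obtain ⟨x, _, _, rfl⟩ := mem_vertPath.1 he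
          simp only [Prod.mk.injEq] at hq
          omega
        · right
          obtain ⟨x, _, _, rfl⟩ := mem_horizPath.1 he
          simp only [Prod.mk.injEq] at hq
          omega
        · right
          obtain ⟨x, _, _, rfl⟩ := mem_vertPath.1 he
          simp only [Prod.mk.injEq] at hq
          omega
    rcases key with h | h
    · rcases ih (by omega) h with h | ⟨l, a, b, c⟩
      · exact Or.inl h
      · exact Or.inr ⟨l, a, by omega, c⟩
    · exact Or.inr ⟨n + 1, by omega, by omega, h⟩

lemma old_column {u s τ m : ℕ} (hu : u ≠ 0) (hm : m ≤ S.N) (h : (u, s) ∈ Repl (S.sol m))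
    (h1 : S.t m ≤ τ) (h2 : τ ≤ s) : (u, τ) ∈ Repl (S.sol m) := by
  rcases origin S hu (Nat.zero_le m) hm h with h' | ⟨l, hl, hlm, _, _, hc⟩
  · exfalso
    rw [S.sol_zero] at h'
    rcases h' with h' | ⟨e, he, _⟩
    · exact hu (congrArg Prod.fst h')
    · simp at he
  · have htl := S.t_mono l m hlm hm
    rcases hc with hc | ⟨rfl, hc1, hc2⟩
    · have : τ = s := by omega
      rw [this]; exact h
    · obtain ⟨-, -, -, -, hst⟩ := serv S (i := l) (by omega) (by omega)
      exact Repl_mono (sol_mono S hlm hm) (vert_mem S (by omega) (by omega) (by omega) (by omega))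

lemma rho_le {i x y : ℕ} (h1 : 1 ≤ i) (hn : i ≤ S.N) (h : (x, y) ∈ Repl (cur S i))
    (hx : x ≤ S.v i) (hy : y ≤ S.t i) : S.ρ i ≤ max (S.v i - x) (S.t i - y) := by
  have := S.rho_min i h1 hn _ h
  unfold distInf at this
  rw [if_pos ⟨hx, hy⟩] at this
  exact_mod_cast this

lemma rho_le' {i l x y : ℕ} (h1 : l < i) (hn : i ≤ S.N) (h : (x, y) ∈ Repl (S.sol l))
    (hx : x ≤ S.v i) (hy : y ≤ S.t i) : S.ρ i ≤ max (S.v i - x) (S.t i - y) :=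
  rho_le S (by omega) hn (Repl_mono ((sol_mono S (by omega) (by omega)).trans (prev_sub_cur S i)) h) hx hy

lemma closest {i : ℕ} (h1 : 1 ≤ i) (hn : i ≤ S.N) :
    S.u' i ≤ S.v i ∧ S.s' i ≤ S.t i ∧ max (S.v i - S.u' i) (S.t i - S.s' i) = S.ρ i := by
  have := S.closest_dist i h1 hn
  unfold distInf at this
  split_ifs at this with h
  · exact ⟨h.1, h.2, by exact_mod_cast this⟩
  · simp at this

lemma serv_le {i x y : ℕ} (h1 : 1 ≤ i) (hn : i ≤ S.N) (h : (x, y) ∈ Repl (cur S i))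
    (hx : x ≤ S.v i) (hy : y ≤ S.t i) (hx' : S.v i ≤ x + 5 * S.ρ i)
    (hy' : S.t i ≤ y + 5 * S.ρ i) : S.us i ≤ x := by
  refine S.serv_min i h1 hn _ h ⟨?_, hx, ?_, hy⟩ <;> simp only <;> omega

/-- facts about uncovered requests -/
lemma unc {i : ℕ} (h1 : 1 ≤ i) (hn : i ≤ S.N) (hu : S.uncovered i) :
    1 ≤ S.ρ i ∧ S.us i ≤ S.u' i ∧ S.v i < S.us i + S.ρ i ∧ S.u' i ≤ S.v i ∧
      S.s' i + S.ρ i = S.t i ∧ S.u' i ≠ 0 := by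
  obtain ⟨a, b, c⟩ := closest S h1 hn
  have d := serv_le S h1 hn (S.closest_mem i h1 hn) a b (by omega) (by omega)
  obtain ⟨-, -, huv, -, -⟩ := serv S h1 hn
  unfold SquareRun.uncovered SquareRun.covered at hu
  refine ⟨by omega, d, by omega, a, by omega, ?_⟩
  intro h0
  have := S.closest_late i h1 hn (S.t i) le_rfl (by rw [h0]; exact zero_mem_cur S h1 hn)
  omega

lemma shared {i j : ℕ} (h : ¬ BallsEdgeDisjoint (S.req j) (S.ρ j) (S.req i) (S.ρ i)) :
    ∃ u s, u ≤ S.v i ∧ s ≤ S.t i ∧ u ≤ S.v j ∧ s ≤ S.t j ∧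
      (S.v i - u) + (S.t i - s) + 1 ≤ S.ρ i ∧ (S.v j - u) + (S.t j - s) + 1 ≤ S.ρ j := by
  unfold BallsEdgeDisjoint at h
  push Not at h
  obtain ⟨⟨⟨a, b⟩, ⟨c, d⟩⟩, ⟨hg, h1, h2⟩, ⟨-, h3, h4⟩⟩ := h
  simp only [isGridEdge, isHoriz, isArc, Prod.mk.injEq, qball, SquareRun.req, Set.mem_ofPred_eq] at hg h1 h2 h3 h4
  exact ⟨c, d, by omega, by omega, by omega, by omega, by omega, by omega⟩

lemma covered_disjoint {i j : ℕ} (hj : 1 ≤ j) (hij : j < i) (hn : i ≤ S.N) (hc : S.covered j) :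
    BallsEdgeDisjoint (S.req j) (S.ρ j) (S.req i) (S.ρ i) := by
  by_contra h
  obtain ⟨u, s, a, b, c, d, e, f⟩ := shared S h
  unfold SquareRun.covered at hc
  have ht := S.t_mono j i hij.le hn
  have := rho_le' S hij hn (horiz_mem S (w := u) hj (by omega) (by omega) c) a ht
  omega

/-- `i` is a possible parent of `j`. -/
def P (i j : ℕ) : Prop :=
  1 ≤ j ∧ j < i ∧ i ≤ S.N ∧ S.uncovered j ∧ S.uncovered i ∧
    ¬ BallsEdgeDisjoint (S.req j) (S.ρ j) (S.req i) (S.ρ i)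

lemma child1 {i j : ℕ} (h : P S i j) :
    S.v i < S.us j ∧ S.v j < S.v i + S.ρ j ∧ S.t i < S.t j + S.ρ i ∧ S.t j ≤ S.t i := by
  obtain ⟨h1, hij, hn, hj, hi, hd⟩ := h
  obtain ⟨u, s, a, b, c, d, e, f⟩ := shared S hd
  have ht := S.t_mono j i hij.le hn
  refine ⟨?_, by omega, by omega, ht⟩
  by_contra hlt
  obtain ⟨-, -, huv, -, -⟩ := serv S h1 (by omega)
  by_cases hu : S.us j ≤ u
  · have := rho_le' S hij hn (horiz_mem S (w := u) h1 (by omega) hu c) a ht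
    omega
  · have := rho_le' S hij hn (horiz_mem S (w := S.us j) h1 (by omega) le_rfl huv) (by omega) ht
    omega

/-- the horizontal paths of requests from `j` on do not cross the column of `i` -/
lemma cross {i j l w : ℕ} (h : P S i j) (hl : j ≤ l) (hli : l < i) (h1 : S.us l ≤ w)
    (h2 : w ≤ S.v l) (hw : S.v i < w) : S.v i < S.us l := by
  obtain ⟨-, -, hc, -⟩ := child1 S h
  obtain ⟨hj1, hij, hn, -, -, -⟩ := h
  by_contra hlt
  have ht := S.t_mono l i hli.le hn
  have ht' := S.t_mono j l hl (by omega)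
  have := rho_le' S hli hn (horiz_mem S (w := S.v i) (by omega) (by omega) (by omega) (by omega)) le_rfl ht
  omega

lemma child_small {i j : ℕ} (h : P S i j) : 4 * S.ρ j < S.ρ i := by
  obtain ⟨ha, hb, hc, hd⟩ := child1 S h
  obtain ⟨h1, hij, hn, hj, hi, -⟩ := h
  obtain ⟨u1, u2, u3, u4, u5, u6⟩ := unc S (by omega) hn hi
  obtain ⟨-, -, huv, -, -⟩ := serv S h1 (by omega)
  have hm := mem_cur_nz S u6 (S.closest_mem i (by omega) hn)
  have hm' : (S.u' i, S.s' i) ∈ Repl (S.sol (j - 1)) := by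
    rcases origin S u6 (show j - 1 ≤ i - 1 by omega) (by omega) hm with h | ⟨l, hl1, hl2, hl3, hl4, -⟩
    · exact h
    · exfalso
      have ht := S.t_mono j l (by omega) (by omega)
      have ht' := S.t_mono l i (by omega) (by omega)
      have := S.closest_late i (by omega) hn (S.t l) ht'
        (Repl_mono ((sol_mono S hl2 (by omega)).trans (prev_sub_cur S i))
          (horiz_mem S (by omega) (by omega) hl3 hl4))
      omega
  by_contra hlt
  have := serv_le S h1 (by omega) (Repl_mono (prev_sub_cur S j) hm') (by omega) (by omega)
    (by obtain ⟨-, -, q⟩ := closest S (i := i) (by omega) hn; omega) (by omega)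
  omega

/-- an old replica between the column of `i` and `us j` is very old. -/
lemma old_low {i j u s : ℕ} (h : P S i j) (hu : S.v i < u) (hu' : u < S.us j)
    (hm : (u, s) ∈ Repl (S.sol (j - 1))) : s + 5 * S.ρ j < S.t j := by
  obtain ⟨ha, hb, hc, hd⟩ := child1 S h
  obtain ⟨h1, hij, hn, hj, hi, -⟩ := h
  obtain ⟨-, -, huv, -, -⟩ := serv S h1 (by omega)
  by_contra hlt
  by_cases hs : s ≤ S.t j
  · have := serv_le S h1 (by omega) (Repl_mono (prev_sub_cur S j) hm) (by omega) hs
      (by omega) (by omega)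
    omega
  · have hm2 := old_column S (τ := S.t j) (by omega) (by omega) hm
      (S.t_mono _ _ (by omega) (by omega)) (by omega)
    have := serv_le S h1 (by omega) (Repl_mono (prev_sub_cur S j) hm2) (by omega) le_rfl
      (by omega) (by omega)
    omega

lemma exists_first (j k a : ℕ) (f : ℕ → ℕ) (hjk : j < k) (ha : a < f j) :
    ∃ K, j ≤ K ∧ K < k ∧ a < f K ∧ f K ≤ f j ∧
      (∀ l, j ≤ l → l < k → a < f l → f K ≤ f l) ∧ (∀ l, j ≤ l → l < K → a < f l → f K < f l) := by
  classical
  have hex : ∃ m, ∃ l, j ≤ l ∧ l < k ∧ a < f l ∧ f l = m := ⟨f j, j, le_rfl, hjk, ha, rfl⟩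
  have hs := Nat.find_spec hex
  have hmin : ∀ l, j ≤ l → l < k → a < f l → Nat.find hex ≤ f l := fun l h1 h2 h3 =>
    Nat.find_min' hex ⟨l, h1, h2, h3, rfl⟩
  generalize Nat.find hex = m at hs hmin
  have hs2 := Nat.find_spec hs
  obtain ⟨b1, b2, b3, b4⟩ := hs2
  refine ⟨Nat.find hs, b1, b2, b3, ?_, ?_, ?_⟩
  · rw [b4]; exact hmin j le_rfl hjk ha
  · intro l h1 h2 h3; rw [b4]; exact hmin l h1 h2 h3
  · intro l h1 h2 h3
    rw [b4]
    refine lt_of_le_of_ne (hmin l h1 (by omega) h3) ?_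
    intro he
    exact Nat.find_min hs h2 ⟨h1, by omega, h3, he.symm⟩

lemma siblings {i j k : ℕ} (hj : P S i j) (hk : P S i k) (hjk : j < k) :
    4 * S.ρ j < S.ρ k ∨ S.t j + 4 * S.ρ j + S.ρ k ≤ S.t k := by
  obtain ⟨a1, a2, a3, a4⟩ := child1 S hj
  obtain ⟨b1, b2, b3, b4⟩ := child1 S hk
  have hk0 := hk
  obtain ⟨h1, hki, hn, hku, -, -⟩ := hk0
  have hj1 : 1 ≤ j := hj.1
  obtain ⟨K, c1, c2, c3, c4, c5, c6⟩ := exists_first j k (S.v i) S.us hjk a1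
  obtain ⟨u1, u2, u3, u4, u5, u6⟩ := unc S h1 (by omega) hku
  have htjK := S.t_mono j K c1 (by omega)
  have htKk := S.t_mono K k c2.le (by omega)
  by_cases hv : S.us K ≤ S.v k
  · right
    have hρ : S.ρ j ≤ S.ρ K := by
      rcases Nat.eq_or_lt_of_le c1 with rfl | hlt
      · exact le_rfl
      · have hne : S.us K ≠ 0 := by omega
        obtain ⟨s1, s2, s3, s4, s5⟩ := serv S (i := K) (by omega) (by omega)
        have hm := mem_cur_nz S hne s1
        have hm' : (S.us K, S.ss K) ∈ Repl (S.sol (j - 1)) := by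
          rcases origin S hne (show j - 1 ≤ K - 1 by omega) (by omega) hm with
            h | ⟨l, hl1, hl2, hl3, hl4, -⟩
          · exact h
          · exfalso
            have hx := cross S hj (l := l) (by omega) (by omega) hl3 hl4 c3
            have := c6 l (by omega) (by omega) hx
            omega
        have := c6 j le_rfl hlt a1
        have := old_low S hj c3 this hm'
        omega
    obtain ⟨s1, s2, s3, s4, s5⟩ := serv S (i := K) (by omega) (by omega)
    have hr := rho_le' S (i := k) (l := K) c2 (by omega)
      (vert_mem S (τ := min (S.t K + 4 * S.ρ K) (S.t k)) (by omega) (by omega) (by omega) (by omega))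
      hv (by omega)
    omega
  · left
    have hm := mem_cur_nz S u6 (S.closest_mem k (by omega) (by omega))
    have hm' : (S.u' k, S.s' k) ∈ Repl (S.sol (j - 1)) := by
      rcases origin S u6 (show j - 1 ≤ k - 1 by omega) (by omega) hm with
        h | ⟨l, hl1, hl2, hl3, hl4, -⟩
      · exact h
      · exfalso
        have hx := cross S hj (l := l) (by omega) (by omega) hl3 hl4 (by omega)
        have := c5 l (by omega) (by omega) hx
        omega
    have := old_low S hj (by omega) (by omega) hm'
    have := S.t_mono j k hjk.le (by omega)
    omega

lemma sum_abs (ρ t : ℕ → ℕ) (a : ℕ) (s : Finset ℕ) :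
    (∀ j ∈ s, a ≤ t j) →
    (∀ j ∈ s, ∀ k ∈ s, j < k → 4 * ρ j < ρ k ∨ t j + 4 * ρ j + ρ k ≤ t k) →
    (∀ j ∈ s, ∀ k ∈ s, j < k → t j ≤ t k) →
    ∀ m ∈ s, (∀ x ∈ s, x ≤ m) → 3 * ∑ j ∈ s, ρ j + a ≤ t m + 4 * ρ m := by
  induction s using Finset.induction_on_max with
  | empty => intro _ _ _ m hm; simp at hm
  | insert b s hb ih =>
    intro h1 h2 h3 m hm hmax
    have hmb : m = b := by
      rcases Finset.mem_insert.1 hm with h | h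
      · exact h
      · have := hmax b (Finset.mem_insert_self _ _)
        have := hb m h
        omega
    subst hmb
    rw [Finset.sum_insert (fun h => lt_irrefl _ (hb _ h))]
    rcases s.eq_empty_or_nonempty with rfl | hne
    · have := h1 m hm
      simp only [Finset.sum_empty]
      omega
    · have hm' := s.max'_mem hne
      have hi := Finset.mem_insert_of_mem (b := m) hm'
      have := ih (fun j hj => h1 j (Finset.mem_insert_of_mem hj))
        (fun j hj k hk => h2 j (Finset.mem_insert_of_mem hj) k (Finset.mem_insert_of_mem hk))
        (fun j hj k hk => h3 j (Finset.mem_insert_of_mem hj) k (Finset.mem_insert_of_mem hk))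
        _ hm' (fun x hx => s.le_max' x hx)
      have q := h2 _ hi m hm (hb _ hm')
      have q' := h3 _ hi m hm (hb _ hm')
      omega

lemma sum_children {i : ℕ} (s : Finset ℕ) (hs : ∀ j ∈ s, P S i j) :
    3 * ∑ j ∈ s, S.ρ j ≤ 2 * S.ρ i := by
  rcases s.eq_empty_or_nonempty with rfl | hne
  · simp
  · have hm := s.max'_mem hne
    have := sum_abs S.ρ S.t (S.t i - S.ρ i) s
      (fun j hj => by have := child1 S (hs j hj); omega)
      (fun j hj k hk => siblings S (hs j hj) (hs k hk))
      (fun j hj k hk hjk => S.t_mono j k hjk.le (by obtain ⟨_, _, _, _⟩ := hs k hk; omega))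
      _ hm (fun x hx => s.le_max' x hx)
    have a := child1 S (hs _ hm)
    have b := child_small S (hs _ hm)
    obtain ⟨c1, c2, c3, c4, c5, -⟩ := hs _ hm
    have := unc S (by omega) c3 c5
    omega

lemma ball_card {F : Finset GEdge} (hF : S.Feasible F) {i : ℕ} (h1 : 1 ≤ i) (hn : i ≤ S.N)
    [DecidablePred (ballEdge (S.req i) (S.ρ i))] :
    S.ρ i ≤ (F.filter (ballEdge (S.req i) (S.ρ i))).card := by
  obtain ⟨hg, hp, -⟩ := hF
  obtain ⟨L, f, f0, fL, hf⟩ := hp i h1 hn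
  have hstep : ∀ k < L, (f k).1 ≤ (f (k + 1)).1 ∧ (f k).2 ≤ (f (k + 1)).2 ∧
      (f (k + 1)).1 + (f (k + 1)).2 = (f k).1 + (f k).2 + 1 := by
    intro k hk
    rcases hg _ (hf k hk) with h | h
    · simp only [isHoriz] at h; rw [h]; simp only; omega
    · simp only [isArc] at h; rw [h]; simp only; omega
  have hsum : ∀ k ≤ L, (f k).1 + (f k).2 = k := by
    intro k
    induction k with
    | zero => intro _; rw [f0]; rfl
    | succ k ih =>
      intro hk
      have := hstep k (by omega)
      have := ih (by omega)
      omega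
  have hmono : ∀ d k, k + d = L → (f k).1 ≤ S.v i ∧ (f k).2 ≤ S.t i := by
    intro d
    induction d with
    | zero =>
      intro k hk
      have : k = L := by omega
      rw [this, fL]; exact ⟨le_rfl, le_rfl⟩
    | succ d ih =>
      intro k hk
      have := hstep k (by omega)
      have := ih (k + 1) (by omega)
      omega
  have hL := hsum L le_rfl
  rw [fL] at hL
  simp only [SquareRun.req] at hL
  have hρ := rho_le S h1 hn (x := 0) (y := 0) (Or.inl rfl) (by omega) (by omega)
  have hb : ∀ k, L ≤ k + S.ρ i → k ≤ L → f k ∈ qball (S.req i) (S.ρ i) := by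
    intro k hk hk'
    have := hmono (L - k) k (by omega)
    have := hsum k hk'
    refine ⟨?_, ?_, ?_⟩ <;> simp only [SquareRun.req] <;> omega
  have hcard := Finset.card_le_card_of_injOn (s := Finset.Ico (L - S.ρ i) L)
    (t := F.filter (ballEdge (S.req i) (S.ρ i))) (fun k => (f k, f (k + 1)))
    (by
      intro k hk
      simp only [Finset.coe_Ico, Set.mem_Ico] at hk
      simp only [Finset.coe_filter, Set.mem_ofPred_eq]
      exact ⟨hf k hk.2, hg _ (hf k hk.2), hb k (by omega) (by omega), hb (k + 1) (by omega) (by omega)⟩)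
    (by
      intro k hk k' hk' h
      simp only [Finset.coe_Ico, Set.mem_Ico] at hk hk'
      simp only [Prod.mk.injEq] at h
      have e1 := hsum k (by omega)
      have e2 := hsum k' (by omega)
      rw [h.1] at e1
      omega)
  rw [Nat.card_Ico] at hcard
  omega

lemma disj_sum {F : Finset GEdge} (hF : S.Feasible F) (I : Finset ℕ)
    (hI : ∀ i ∈ I, 1 ≤ i ∧ i ≤ S.N)
    (hd : ∀ i ∈ I, ∀ j ∈ I, i < j → BallsEdgeDisjoint (S.req i) (S.ρ i) (S.req j) (S.ρ j)) :
    ∑ i ∈ I, S.ρ i ≤ F.card := by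
  classical
  calc ∑ i ∈ I, S.ρ i ≤ ∑ i ∈ I, (F.filter (ballEdge (S.req i) (S.ρ i))).card :=
        Finset.sum_le_sum fun i hi => ball_card S hF (hI i hi).1 (hI i hi).2
    _ = (I.biUnion fun i => F.filter (ballEdge (S.req i) (S.ρ i))).card := by
        refine (Finset.card_biUnion ?_).symm
        intro i hi j hj hij
        rw [Function.onFun, Finset.disjoint_left]
        intro e he he'
        rw [Finset.mem_filter] at he he'
        rcases lt_or_gt_of_ne hij with h | h
        · exact hd i hi j hj h e ⟨he.2, he'.2⟩
        · exact hd j hj i hi h e ⟨he'.2, he.2⟩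
    _ ≤ F.card := by
        refine Finset.card_le_card ?_
        intro e he
        obtain ⟨i, _, he⟩ := Finset.mem_biUnion.1 he
        exact (Finset.mem_filter.1 he).1

lemma time_le {F : Finset GEdge} (hF : S.Feasible F) : S.t S.N ≤ F.card := by
  obtain ⟨-, -, h⟩ := hF
  choose! w hw using h
  have := Finset.card_le_card_of_injOn (s := Finset.range (S.t S.N)) (t := F)
    (fun τ => ((w τ, τ), (w τ, τ + 1)))
    (by intro τ hτ; exact hw τ (by simpa using hτ))
    (by intro a _ b _ hab; simp only [Prod.mk.injEq] at hab; exact hab.1.2)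
  simpa using this

lemma card_vert (u s τ : ℕ) : (vertPath u s τ).card ≤ τ - s :=
  Finset.card_image_le.trans (by simp)

lemma card_horiz (u s τ : ℕ) : (horizPath τ u s).card ≤ s - u :=
  Finset.card_image_le.trans (by simp)

lemma cost_le (n : ℕ) (hn : n ≤ S.N) :
    (S.sol n).card ≤ S.t n + 14 * ∑ i ∈ Finset.Icc 1 n, S.ρ i := by
  induction n with
  | zero => rw [S.sol_zero]; simp
  | succ n ih =>
    have ih := ih (by omega)
    rw [Finset.sum_Icc_succ_top (by omega), S.step (n + 1) (by omega) hn]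
    obtain ⟨-, s2, s3, s4, s5⟩ := serv S (i := n + 1) (by omega) hn
    have := S.t_mono n (n + 1) (by omega) hn
    refine (Finset.card_union_le _ _).trans ?_
    have a1 := card_vert (S.us (n + 1)) (S.t (n + 1)) (S.t (n + 1) + 4 * S.ρ (n + 1))
    have a2 := card_vert (S.us (n + 1)) (S.ss (n + 1)) (S.t (n + 1))
    have a3 := card_horiz (S.us (n + 1)) (S.v (n + 1)) (S.t (n + 1))
    have a4 := card_vert 0 (S.t n) (S.t (n + 1))
    have b1 := Finset.card_union_le ((S.sol (n + 1 - 1) ∪ vertPath 0 (S.t (n + 1 - 1)) (S.t (n + 1)))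
      ∪ vertPath (S.us (n + 1)) (S.ss (n + 1)) (S.t (n + 1)))
      (horizPath (S.t (n + 1)) (S.us (n + 1)) (S.v (n + 1)))
    have b2 := Finset.card_union_le (S.sol (n + 1 - 1) ∪ vertPath 0 (S.t (n + 1 - 1)) (S.t (n + 1)))
      (vertPath (S.us (n + 1)) (S.ss (n + 1)) (S.t (n + 1)))
    have b3 := Finset.card_union_le (S.sol (n + 1 - 1)) (vertPath 0 (S.t (n + 1 - 1)) (S.t (n + 1)))
    simp only [Nat.add_sub_cancel] at b1 b2 b3 ⊢
    omega

lemma unc_sum {F : Finset GEdge} (hF : S.Feasible F) (U : Finset ℕ)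
    (hU : ∀ i, i ∈ U ↔ (1 ≤ i ∧ i ≤ S.N ∧ S.uncovered i)) :
    ∑ i ∈ U, S.ρ i ≤ 3 * F.card := by
  classical
  have hpar : ∃ p : ℕ → ℕ, ∀ j, (∃ i, P S i j) → P S (p j) j := by
    refine ⟨fun j => if h : ∃ i, P S i j then h.choose else 0, fun j h => ?_⟩
    simp only [dif_pos h]
    exact h.choose_spec
  obtain ⟨p, hp⟩ := hpar
  have hsplit := Finset.sum_filter_add_sum_filter_not U (fun j => ∃ i, P S i j) S.ρ
  have hroots : ∑ j ∈ U.filter (fun j => ¬ ∃ i, P S i j), S.ρ j ≤ F.card := by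
    refine disj_sum S hF _ ?_ ?_
    · intro i hi
      have := (hU i).1 (Finset.mem_filter.1 hi).1
      exact ⟨this.1, this.2.1⟩
    · intro i hi j hj hij
      have h1 := (hU i).1 (Finset.mem_filter.1 hi).1
      have h2 := (hU j).1 (Finset.mem_filter.1 hj).1
      by_contra hd
      exact (Finset.mem_filter.1 hi).2 ⟨j, h1.1, hij, h2.2.1, h1.2.2, h2.2.2, hd⟩
  have hfib : ∑ j ∈ U.filter (fun j => ∃ i, P S i j), S.ρ j
      = ∑ i ∈ U, ∑ j ∈ (U.filter (fun j => ∃ i, P S i j)).filter (fun j => p j = i), S.ρ j := by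
    refine (Finset.sum_fiberwise_of_maps_to ?_ _).symm
    intro j hj
    obtain ⟨a, b, c, d, e, f⟩ := hp j (Finset.mem_filter.1 hj).2
    exact (hU _).2 ⟨by omega, c, e⟩
  have hch : 3 * ∑ j ∈ U.filter (fun j => ∃ i, P S i j), S.ρ j ≤ 2 * ∑ i ∈ U, S.ρ i := by
    rw [hfib, Finset.mul_sum, Finset.mul_sum]
    refine Finset.sum_le_sum fun i _ => sum_children S _ ?_
    intro j hj
    rw [Finset.mem_filter] at hj
    have := hp j (Finset.mem_filter.1 hj.1).2
    rw [hj.2] at this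
    exact this
  omega

end SQ

/-- Algorithm Square is `O(1)`-competitive: there is an absolute constant `c`
such that for every request sequence, `cost(Square, R) ≤ c·|opt|`. -/
theorem square_O1_competitive :
    ∃ c : ℕ, ∀ (S : SquareRun) (F : Finset GEdge), S.Feasible F →
      (S.sol S.N).card ≤ c * F.card := by
  classical
  refine ⟨57, fun S F hF => ?_⟩
  have h1 := SQ.cost_le S S.N le_rfl
  have h2 := SQ.time_le S hF
  have h3 := Finset.sum_filter_add_sum_filter_not (Finset.Icc 1 S.N) (fun j => S.covered j) S.ρ
  have h4 := SQ.unc_sum S hF ((Finset.Icc 1 S.N).filter (fun j => ¬ S.covered j)) (by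
    intro i
    simp only [Finset.mem_filter, Finset.mem_Icc, SquareRun.uncovered]
    tauto)
  have h5 := SQ.disj_sum S hF ((Finset.Icc 1 S.N).filter (fun j => S.covered j))
    (fun i hi => Finset.mem_Icc.1 (Finset.mem_filter.1 hi).1)
    (fun i hi j hj hij => by
      rw [Finset.mem_filter, Finset.mem_Icc] at hi hj
      exact SQ.covered_disjoint S hi.1.1 hij hj.1.2 hi.2)
  omega
end

section
/- There exist a constant c>0 and a deterministic online RSA algorithm A such that for every input sequence Q of N points, cost(A,Q) ≤ c·max(1, log N/log log N)·opt(Q). -/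
open MeasureTheory
open scoped ENNReal

/-- A point of the plane. -/
abbrev Pt : Type := ℝ × ℝ

/-- `a` and `b` span an axis-parallel closed segment lying in the closed
positive quadrant. -/
def axisSeg (a b : Pt) : Prop :=
  (a.1 = b.1 ∨ a.2 = b.2) ∧ 0 ≤ a.1 ∧ 0 ≤ a.2 ∧ 0 ≤ b.1 ∧ 0 ≤ b.2

/-- `S` is a finite union of axis-parallel closed segments in the quadrant. -/
def IsRectilinearUnion (S : Set Pt) : Prop :=
  ∃ (k : ℕ) (a b : Fin k → Pt), (∀ j, axisSeg (a j) (b j)) ∧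
    S = ⋃ j, segment ℝ (a j) (b j)

/-- There is a rectilinear path in `S` from the origin to `p` that is both
`x`-monotone and `y`-monotone. -/
def MonPathTo (S : Set Pt) (p : Pt) : Prop :=
  ∃ f : ℝ → Pt, ContinuousOn f (Set.Icc (0 : ℝ) 1) ∧ f 0 = (0, 0) ∧ f 1 = p ∧
    (∀ s ∈ Set.Icc (0 : ℝ) 1, f s ∈ S) ∧
    (∀ s₁ ∈ Set.Icc (0 : ℝ) 1, ∀ s₂ ∈ Set.Icc (0 : ℝ) 1, s₁ ≤ s₂ →
      (f s₁).1 ≤ (f s₂).1 ∧ (f s₁).2 ≤ (f s₂).2)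

/-- A feasible RSA solution for the points of `Q`. -/
def FeasibleRSA (Q : List Pt) (S : Set Pt) : Prop :=
  IsRectilinearUnion S ∧ ∀ p ∈ Q, MonPathTo S p

/-- The cost of a solution: its total length (one-dimensional Hausdorff
measure). -/
noncomputable def rsaCost (S : Set Pt) : ℝ≥0∞ := μH[1] S

/-- The optimum cost `opt(Q)`: the infimum of the costs of feasible solutions. -/
noncomputable def optRSA (Q : List Pt) : ℝ≥0∞ :=
  sInf {c : ℝ≥0∞ | ∃ S : Set Pt, FeasibleRSA Q S ∧ rsaCost S = c}

/-- A valid RSA input: points in the closed positive quadrant, given in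
nondecreasing order of `y`-coordinate. -/
def ValidRSA (Q : List Pt) : Prop :=
  (∀ p ∈ Q, 0 ≤ p.1 ∧ 0 ≤ p.2) ∧ Q.Chain' (fun a b => a.2 ≤ b.2)

/-- The `y`-coordinate of the last point of `Q` (`0` if `Q` is empty). -/
def lastY (Q : List Pt) : ℝ := Q.getLast?.elim 0 Prod.snd

/-- A deterministic online RSA algorithm: it outputs a feasible solution on
every valid input sequence, the output only grows when a new point arrives, and
every newly added point of the solution has `y`-coordinate at least the
`y`-coordinate of the previously served request. -/
def OnlineRSA (A : List Pt → Set Pt) : Prop :=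
  (∀ Q, ValidRSA Q → FeasibleRSA Q (A Q)) ∧
  (∀ Q p, ValidRSA (Q ++ [p]) →
    A Q ⊆ A (Q ++ [p]) ∧ ∀ q ∈ A (Q ++ [p]) \ A Q, lastY Q ≤ q.2)


namespace RSAon

def box (p : Pt) (ρ : ℝ) : Set Pt := Set.Ioc (p.1 - ρ) p.1 ×ˢ Set.Ioc (p.2 - ρ) p.2

lemma measurableSet_box (p : Pt) (ρ : ℝ) : MeasurableSet (box p ρ) :=
  measurableSet_Ioc.prod measurableSet_Ioc

lemma le_of_fst {A : Set Pt} {a b : ℝ} (h : Set.Ioc a b ⊆ Prod.fst '' A) :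
    ENNReal.ofReal (b - a) ≤ μH[1] A := by
  calc ENNReal.ofReal (b - a) = μH[1] (Set.Ioc a b) := by
        rw [MeasureTheory.hausdorffMeasure_real, Real.volume_Ioc]
    _ ≤ μH[1] (Prod.fst '' A) := measure_mono h
    _ ≤ μH[1] A := by
        have := (LipschitzWith.prod_fst (α := ℝ) (β := ℝ)).hausdorffMeasure_image_le
          (d := 1) zero_le_one A
        simpa using this

lemma le_of_snd {A : Set Pt} {a b : ℝ} (h : Set.Ioc a b ⊆ Prod.snd '' A) :
    ENNReal.ofReal (b - a) ≤ μH[1] A := by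
  calc ENNReal.ofReal (b - a) = μH[1] (Set.Ioc a b) := by
        rw [MeasureTheory.hausdorffMeasure_real, Real.volume_Ioc]
    _ ≤ μH[1] (Prod.snd '' A) := measure_mono h
    _ ≤ μH[1] A := by
        have := (LipschitzWith.prod_snd (α := ℝ) (β := ℝ)).hausdorffMeasure_image_le
          (d := 1) zero_le_one A
        simpa using this

lemma box_lower {S : Set Pt} {p : Pt} (h : MonPathTo S p) {ρ : ℝ} (h0 : 0 < ρ) (hρ : ρ ≤ p.1) :
    ENNReal.ofReal ρ ≤ μH[1] (S ∩ box p ρ) := by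
  obtain ⟨f, hc, hf0, hf1, hS, hm⟩ := h
  have hc1 : ContinuousOn (fun s => (f s).1) (Set.Icc 0 1) := continuous_fst.comp_continuousOn hc
  have hc2 : ContinuousOn (fun s => (f s).2) (Set.Icc 0 1) := continuous_snd.comp_continuousOn hc
  have hK : IsCompact (Set.Icc (0:ℝ) 1 ∩ (fun s => (f s).1) ⁻¹' Set.Iic (p.1 - ρ)) := by
    refine isCompact_Icc.of_isClosed_subset ?_ Set.inter_subset_left
    exact hc1.preimage_isClosed_of_isClosed isClosed_Icc isClosed_Iic
  have hne : (Set.Icc (0:ℝ) 1 ∩ (fun s => (f s).1) ⁻¹' Set.Iic (p.1 - ρ)).Nonempty := by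
    refine ⟨0, ⟨le_refl _, zero_le_one⟩, ?_⟩
    simp [hf0, hρ]
  obtain ⟨s, ⟨hs, hs1⟩, hsg⟩ := hK.exists_isGreatest hne
  simp only [Set.mem_preimage, Set.mem_Iic] at hs1
  have hgt : ∀ s' ∈ Set.Icc (0:ℝ) 1, s < s' → p.1 - ρ < (f s').1 := by
    intro s' hs' hlt
    by_contra hcon
    exact absurd (hsg ⟨hs', not_lt.1 hcon⟩) (not_le.2 hlt)
  have hsub : Set.Icc s 1 ⊆ Set.Icc (0:ℝ) 1 := Set.Icc_subset_Icc_left hs.1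
  have h1 : (1:ℝ) ∈ Set.Icc (0:ℝ) 1 := ⟨zero_le_one, le_refl _⟩
  by_cases h2 : p.2 - ρ < (f s).2
  · have : Set.Ioc (p.1 - ρ) p.1 ⊆ Prod.fst '' (S ∩ box p ρ) := by
      intro v hv
      have := intermediate_value_Icc hs.2 (hc1.mono hsub)
      obtain ⟨s', hs', hv'⟩ := this (show v ∈ Set.Icc (f s).1 (f 1).1 from
        ⟨hs1.trans hv.1.le, by rw [hf1]; exact hv.2⟩)
      have a1 := hm s hs s' (hsub hs') hs'.1
      have a2 := hm s' (hsub hs') 1 h1 hs'.2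
      rw [hf1] at a2
      simp only at hv'
      refine ⟨f s', ⟨hS _ (hsub hs'), ⟨?_, ?_⟩, ?_, ?_⟩, hv'⟩
      · rw [hv']; exact hv.1
      · exact a2.1
      · exact h2.trans_le a1.2
      · exact a2.2
    simpa using le_of_fst this
  · have : Set.Ioc (p.2 - ρ) p.2 ⊆ Prod.snd '' (S ∩ box p ρ) := by
      intro v hv
      have := intermediate_value_Icc hs.2 (hc2.mono hsub)
      obtain ⟨s', hs', hv'⟩ := this (show v ∈ Set.Icc (f s).2 (f 1).2 from
        ⟨(not_lt.1 h2).trans hv.1.le, by rw [hf1]; exact hv.2⟩)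
      have a2 := hm s' (hsub hs') 1 h1 hs'.2
      rw [hf1] at a2
      simp only at hv'
      have hlt : s < s' := by
        refine lt_of_le_of_ne hs'.1 ?_
        rintro rfl
        linarith [hv.1]
      refine ⟨f s', ⟨hS _ (hsub hs'), ⟨?_, ?_⟩, ?_, ?_⟩, hv'⟩
      · exact hgt s' (hsub hs') hlt
      · exact a2.1
      · rw [hv']; exact hv.1
      · exact a2.2
    simpa using le_of_snd this

lemma snd_lower {S : Set Pt} {p : Pt} (h : MonPathTo S p) :
    ENNReal.ofReal p.2 ≤ μH[1] S := by
  obtain ⟨f, hc, hf0, hf1, hS, hm⟩ := h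
  have hc2 : ContinuousOn (fun s => (f s).2) (Set.Icc 0 1) := continuous_snd.comp_continuousOn hc
  have : Set.Ioc 0 p.2 ⊆ Prod.snd '' S := by
    intro v hv
    obtain ⟨s', hs', hv'⟩ := intermediate_value_Icc zero_le_one hc2
      (show v ∈ Set.Icc (f 0).2 (f 1).2 by rw [hf0, hf1]; exact ⟨hv.1.le, hv.2⟩)
    exact ⟨f s', hS _ hs', hv'⟩
  simpa using le_of_snd this

lemma pack_lower {S : Set Pt} {ι : Type} (s : Finset ι) (pt : ι → Pt) (ρ : ι → ℝ)
    (hp : ∀ a ∈ s, MonPathTo S (pt a) ∧ 0 < ρ a ∧ ρ a ≤ (pt a).1)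
    (hd : ∀ a ∈ s, ∀ b ∈ s, a ≠ b → Disjoint (box (pt a) (ρ a)) (box (pt b) (ρ b))) :
    ENNReal.ofReal (∑ a ∈ s, ρ a) ≤ μH[1] S := by
  rw [ENNReal.ofReal_sum_of_nonneg (fun a ha => (hp a ha).2.1.le)]
  calc ∑ a ∈ s, ENNReal.ofReal (ρ a)
      ≤ ∑ a ∈ s, (μH[1]).restrict S (box (pt a) (ρ a)) := by
        refine Finset.sum_le_sum fun a ha => ?_
        rw [Measure.restrict_apply (measurableSet_box _ _), Set.inter_comm]
        exact box_lower (hp a ha).1 (hp a ha).2.1 (hp a ha).2.2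
    _ = (μH[1]).restrict S (⋃ a ∈ s, box (pt a) (ρ a)) := by
        rw [measure_biUnion_finset (fun a ha b hb hab => hd a ha b hb hab)
          (fun a _ => measurableSet_box _ _)]
    _ ≤ (μH[1]).restrict S Set.univ := measure_mono (Set.subset_univ _)
    _ = μH[1] S := by simp

lemma pack_line {ι : Type} (s : Finset ι) (x ρ : ι → ℝ) {W : ℝ} (hW : 0 ≤ W)
    (hp : ∀ a ∈ s, 0 < ρ a ∧ ρ a ≤ x a ∧ x a ≤ W)
    (hd : ∀ a ∈ s, ∀ b ∈ s, a ≠ b →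
      Disjoint (Set.Ioc (x a - ρ a) (x a)) (Set.Ioc (x b - ρ b) (x b))) :
    ∑ a ∈ s, ρ a ≤ W := by
  have : ENNReal.ofReal (∑ a ∈ s, ρ a) ≤ ENNReal.ofReal W := by
    rw [ENNReal.ofReal_sum_of_nonneg (fun a ha => (hp a ha).1.le)]
    calc ∑ a ∈ s, ENNReal.ofReal (ρ a) = ∑ a ∈ s, volume (Set.Ioc (x a - ρ a) (x a)) := by
          refine Finset.sum_congr rfl fun a _ => ?_
          rw [Real.volume_Ioc]; congr 1; ring
      _ = volume (⋃ a ∈ s, Set.Ioc (x a - ρ a) (x a)) := by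
          rw [measure_biUnion_finset (fun a ha b hb hab => hd a ha b hb hab)
            (fun a _ => measurableSet_Ioc)]
      _ ≤ volume (Set.Ioc 0 W) := by
          refine measure_mono ?_
          refine Set.iUnion₂_subset fun a ha v hv => ⟨?_, hv.2.trans (hp a ha).2.2⟩
          have := (hp a ha).2.1
          linarith [hv.1]
      _ = ENNReal.ofReal W := by rw [Real.volume_Ioc, sub_zero]
  exact (ENNReal.ofReal_le_ofReal_iff hW).1 this

lemma zsum (F : Finset ℤ) : ∀ M : ℤ, (∀ w ∈ F, w ≤ M) → ∑ w ∈ F, (2:ℝ)^w ≤ 2^(M+1) := by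
  induction F using Finset.induction_on_max with
  | empty => intro M _; simp; positivity
  | insert a F ha ih =>
    intro M hM
    have hna : a ∉ F := fun h => lt_irrefl _ (ha a h)
    rw [Finset.sum_insert hna]
    have h1 := ih (a-1) (fun w hw => by have := ha w hw; omega)
    have h2 : a ≤ M := hM a (Finset.mem_insert_self _ _)
    have h3 : (2:ℝ)^(a+1) ≤ 2^(M+1) := zpow_le_zpow_right₀ (by norm_num) (by omega)
    have h4 : (2:ℝ)^(a+1) = 2^a + 2^a := by rw [zpow_add_one₀ (by norm_num)]; ring
    rw [sub_add_cancel] at h1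
    linarith

lemma telescope (t : ℕ → ℝ) (lo hi : ℝ) (hlh : lo ≤ hi) (P : ℕ → Prop) [DecidablePred P] (N : ℕ)
    (hmono : ∀ i, i + 1 < N → t i ≤ t (i+1))
    (hP : ∀ i, i + 1 < N → P (i+1) → lo ≤ t i ∧ t (i+1) ≤ hi) :
    ∑ i ∈ (Finset.range (N-1)).filter (fun i => P (i+1)), (t (i+1) - t i) ≤ hi - lo := by
  rw [Finset.sum_filter]
  let g : ℕ → ℝ := fun i => max lo (min hi (t i))
  have key : ∀ i ∈ Finset.range (N-1), (if P (i+1) then t (i+1) - t i else 0) ≤ g (i+1) - g i := by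
    intro i hi'
    have hi2 : i + 1 < N := by have := Finset.mem_range.1 hi'; omega
    have hm := hmono i hi2
    split_ifs with h
    · obtain ⟨h1, h2⟩ := hP i hi2 h
      have e1 : g (i+1) = t (i+1) := by
        simp only [g]; rw [min_eq_right h2, max_eq_right (h1.trans hm)]
      have e2 : g i = t i := by
        simp only [g]; rw [min_eq_right (hm.trans h2), max_eq_right h1]
      rw [e1, e2]
    · have : g i ≤ g (i+1) := max_le_max le_rfl (min_le_min le_rfl hm)
      linarith
  refine (Finset.sum_le_sum key).trans ?_
  rw [Finset.sum_range_sub]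
  have h1 : g (N-1) ≤ hi := max_le hlh (min_le_left _ _)
  have h2 : lo ≤ g 0 := le_max_left _ _
  linarith

/-! paths -/

lemma path_mono {S T : Set Pt} {p : Pt} (h : MonPathTo S p) (hST : S ⊆ T) : MonPathTo T p := by
  obtain ⟨f, hc, hf0, hf1, hS, hm⟩ := h
  exact ⟨f, hc, hf0, hf1, fun s hs => hST (hS s hs), hm⟩

lemma path_zero {S : Set Pt} (h : ((0:ℝ),(0:ℝ)) ∈ S) : MonPathTo S (0,0) :=
  ⟨fun _ => (0,0), continuousOn_const, rfl, rfl, fun _ _ => h, fun _ _ _ _ _ => ⟨le_rfl, le_rfl⟩⟩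

lemma path_ext {S : Set Pt} {p q : Pt} (h : MonPathTo S p) (hseg : segment ℝ p q ⊆ S)
    (h1 : p.1 ≤ q.1) (h2 : p.2 ≤ q.2) : MonPathTo S q := by
  obtain ⟨f, hc, hf0, hf1, hS, hm⟩ := h
  have hmem : ∀ s ∈ Set.Icc (0:ℝ) 1, min (2*s) 1 ∈ Set.Icc (0:ℝ) 1 := fun s hs =>
    ⟨le_min (by linarith [hs.1]) zero_le_one, min_le_right _ _⟩
  refine ⟨fun s => f (min (2*s) 1) + (max (2*s-1) 0) • (q - p), ?_, ?_, ?_, ?_, ?_⟩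
  · refine ContinuousOn.add ?_ ?_
    · exact hc.comp (by fun_prop) hmem
    · fun_prop
  · simp [hf0]
  · norm_num [hf1]
  · intro s hs
    rcases le_total (2*s) 1 with h | h
    · have e : max (2*s-1) 0 = 0 := max_eq_right (by linarith)
      simp only [e, zero_smul, add_zero]
      exact hS _ (hmem s hs)
    · have e : max (2*s-1) 0 = 2*s-1 := max_eq_left (by linarith)
      simp only [e, min_eq_right h, hf1]
      apply hseg
      rw [segment_eq_image']
      exact ⟨2*s-1, ⟨by linarith, by linarith [hs.2]⟩, rfl⟩
  · intro s₁ hs₁ s₂ hs₂ hle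
    have a := hm _ (hmem s₁ hs₁) _ (hmem s₂ hs₂) (min_le_min (by linarith) le_rfl)
    have b : max (2*s₁-1) 0 ≤ max (2*s₂-1) 0 := max_le_max (by linarith) le_rfl
    simp only [Prod.fst_add, Prod.snd_add, Prod.smul_fst, Prod.smul_snd, Prod.fst_sub,
      Prod.snd_sub, smul_eq_mul]
    exact ⟨add_le_add a.1 (mul_le_mul_of_nonneg_right b (by linarith)),
      add_le_add a.2 (mul_le_mul_of_nonneg_right b (by linarith))⟩

/-! segments -/

lemma seg_v (c a b : ℝ) (h : a ≤ b) :
    segment ℝ ((c,a):Pt) (c,b) = (fun y => (c,y)) '' Set.Icc a b := by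
  rw [← segment_eq_Icc h, Prod.image_mk_segment_right]

lemma seg_h (c a b : ℝ) (h : a ≤ b) :
    segment ℝ ((a,c):Pt) (b,c) = (fun y => (y,c)) '' Set.Icc a b := by
  rw [← segment_eq_Icc h, Prod.image_mk_segment_left]

lemma cost_v (c a b : ℝ) (h : a ≤ b) : μH[1] (segment ℝ ((c,a):Pt) (c,b)) ≤ ENNReal.ofReal (b-a) := by
  rw [seg_v c a b h]
  have := (LipschitzWith.prodMk_left (β := ℝ) c).hausdorffMeasure_image_le
          (d := 1) zero_le_one (Set.Icc a b)
  simpa [MeasureTheory.hausdorffMeasure_real] using this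

lemma cost_h (c a b : ℝ) (h : a ≤ b) : μH[1] (segment ℝ ((a,c):Pt) (b,c)) ≤ ENNReal.ofReal (b-a) := by
  rw [seg_h c a b h]
  have := (LipschitzWith.prodMk_right (α := ℝ) c).hausdorffMeasure_image_le
          (d := 1) zero_le_one (Set.Icc a b)
  simpa [MeasureTheory.hausdorffMeasure_real] using this

lemma ru_empty : IsRectilinearUnion ∅ :=
  ⟨0, Fin.elim0, Fin.elim0, fun j => j.elim0, by simp⟩

lemma ru_seg {a b : Pt} (h : axisSeg a b) : IsRectilinearUnion (segment ℝ a b) :=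
  ⟨1, fun _ => a, fun _ => b, fun _ => h, (Set.iUnion_const _).symm⟩

lemma ru_union {S T : Set Pt} (hS : IsRectilinearUnion S) (hT : IsRectilinearUnion T) :
    IsRectilinearUnion (S ∪ T) := by
  obtain ⟨k, a, b, h, rfl⟩ := hS
  obtain ⟨l, a', b', h', rfl⟩ := hT
  refine ⟨k + l, Fin.append a a', Fin.append b b', ?_, ?_⟩
  · intro j
    refine Fin.addCases (fun j => ?_) (fun j => ?_) j
    · simpa using h j
    · simpa using h' j
  · ext z
    simp only [Set.mem_union, Set.mem_iUnion]
    constructor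
    · rintro (⟨j, hj⟩ | ⟨j, hj⟩)
      · exact ⟨Fin.castAdd l j, by simpa using hj⟩
      · exact ⟨Fin.natAdd k j, by simpa using hj⟩
    · rintro ⟨j, hj⟩
      revert hj
      refine Fin.addCases (fun j => ?_) (fun j => ?_) j
      · intro hj; left; exact ⟨j, by simpa using hj⟩
      · intro hj; right; exact ⟨j, by simpa using hj⟩

lemma ru_biUnion {ι : Type} (s : Finset ι) (f : ι → Set Pt)
    (h : ∀ a ∈ s, IsRectilinearUnion (f a)) : IsRectilinearUnion (⋃ a ∈ s, f a) := by
  classical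
  induction s using Finset.induction_on with
  | empty => simpa using ru_empty
  | insert a s _ ih =>
    rw [Finset.set_biUnion_insert]
    exact ru_union (h a (Finset.mem_insert_self _ _))
      (ih fun b hb => h b (Finset.mem_insert_of_mem hb))


noncomputable section

def ee (i : ℕ) : ℕ := Nat.clog 2 (Nat.clog 2 (i+1))
def dd (e : ℕ) : ℕ := 2^(e/2+1)
def LL (e : ℕ) : ℕ := 2^e/(e/2+1)+1

def MM (p : ℕ → Pt) : ℕ → ℝ
  | 0 => (p 0).1
  | i+1 => max (MM p i) (p (i+1)).1

def ww (p : ℕ → Pt) (i : ℕ) : ℤ := Int.clog 2 (MM p i)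

structure Key where
  e : ℕ
  w : ℤ
  k : ℕ
  m : ℕ
  n : ℕ

def scl (e : ℕ) (w : ℤ) (k : ℕ) : ℝ := (2:ℝ)^w / (dd e : ℝ)^k

def Key.sc (κ : Key) : ℝ := scl κ.e κ.w κ.k

def rad (p : ℕ → Pt) (a : ℕ → ℝ) (i : ℕ) : ℝ := ((p i).1 - a i)/(2*dd (ee i))

def Tch (p : ℕ → Pt) (a : ℕ → ℝ) (i : ℕ) (κ : Key) : Prop :=
  κ.e = ee i ∧ κ.w = ww p i ∧ κ.k ≤ LL κ.e ∧ 1 ≤ κ.m ∧ κ.n * κ.sc ≤ (p i).2 ∧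
  (p i).2 < (κ.n+1) * κ.sc ∧ κ.m * κ.sc ≤ (p i).1 ∧ (p i).1 - rad p a i < (κ.m+1)*κ.sc

def ps (p : ℕ → Pt) (a : ℕ → ℝ) (κ : Key) (j : ℕ) : ℝ := max ((p j).1 - rad p a j) (κ.m*κ.sc)

def al (p : ℕ → Pt) (a : ℕ → ℝ) (i : ℕ) : Set Key :=
  {κ | κ.e = ee i ∧ κ.w = ww p i ∧ (p i).2 ≤ (κ.n+2)*κ.sc ∧ ∃ j < i, Tch p a j κ}

def cpos (p : ℕ → Pt) (a : ℕ → ℝ) (i : ℕ) (κ : Key) : ℝ :=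
  sInf (ps p a κ '' {j | j < i ∧ Tch p a j κ})

def cands (p : ℕ → Pt) (a : ℕ → ℝ) (i : ℕ) : Set ℝ :=
  insert 0 ((cpos p a i '' al p a i) ∩ Set.Iic (p i).1)

def anc (p : ℕ → Pt) (i : ℕ) : ℝ :=
  sSup (cands p (fun j => if j < i then anc p j else 0) i)
termination_by i

lemma scl_pos (e : ℕ) (w : ℤ) (k : ℕ) : 0 < scl e w k := by
  unfold scl dd; positivity

lemma Key.sc_pos (κ : Key) : 0 < κ.sc := scl_pos _ _ _

lemma tch_finite (p : ℕ → Pt) (a : ℕ → ℝ) (i : ℕ) : {κ | Tch p a i κ}.Finite := by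
  let f : ℕ → ℕ × ℕ → Key := fun k mn => ⟨ee i, ww p i, k, mn.1, mn.2⟩
  have : (⋃ k ∈ Set.Iic (LL (ee i)), f k ''
      (Set.Iic ⌊(p i).1 / scl (ee i) (ww p i) k⌋₊ ×ˢ
        Set.Iic ⌊(p i).2 / scl (ee i) (ww p i) k⌋₊)).Finite := by
    refine Set.Finite.biUnion (Set.finite_Iic _) fun k _ => Set.Finite.image _ ?_
    exact (Set.finite_Iic _).prod (Set.finite_Iic _)
  refine this.subset ?_
  rintro ⟨e, w, k, m, n⟩ ⟨h1, h2, h3, h4, h5, h6, h7, h8⟩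
  simp only at h1 h2 h3
  subst h1 h2
  have hp := scl_pos (ee i) (ww p i) k
  simp only [Set.mem_iUnion]
  refine ⟨k, h3, (m,n), ⟨?_, ?_⟩, rfl⟩
  · exact Nat.le_floor ((le_div_iff₀ hp).2 h7)
  · exact Nat.le_floor ((le_div_iff₀ hp).2 h5)

lemma al_finite (p : ℕ → Pt) (a : ℕ → ℝ) (i : ℕ) : (al p a i).Finite := by
  have : (⋃ j ∈ Set.Iio i, {κ | Tch p a j κ}).Finite :=
    Set.Finite.biUnion (Set.finite_Iio _) fun j _ => tch_finite p a j
  refine this.subset ?_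
  rintro κ ⟨_, _, _, j, hj, h⟩
  simp only [Set.mem_iUnion]
  exact ⟨j, hj, h⟩

lemma MM_congr {p p' : ℕ → Pt} {i : ℕ} (h : ∀ j ≤ i, p j = p' j) : MM p i = MM p' i := by
  induction i with
  | zero => simp [MM, h 0 le_rfl]
  | succ i ih =>
    simp only [MM]
    rw [ih (fun j hj => h j (by omega)), h (i+1) le_rfl]

lemma rad_congr {p p' : ℕ → Pt} {a a' : ℕ → ℝ} {i : ℕ} (h : ∀ j ≤ i, p j = p' j)
    (ha : a i = a' i) : rad p a i = rad p' a' i := by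
  simp only [rad, h i le_rfl, ha]

lemma tch_congr {p p' : ℕ → Pt} {a a' : ℕ → ℝ} {i : ℕ} (h : ∀ j ≤ i, p j = p' j)
    (ha : a i = a' i) (κ : Key) : Tch p a i κ ↔ Tch p' a' i κ := by
  simp only [Tch, ww, rad_congr h ha, MM_congr h, h i le_rfl]

lemma al_congr {p p' : ℕ → Pt} {a a' : ℕ → ℝ} {i : ℕ} (h : ∀ j ≤ i, p j = p' j)
    (ha : ∀ j < i, a j = a' j) : al p a i = al p' a' i := by
  have : ∀ κ, (∃ j < i, Tch p a j κ) ↔ (∃ j < i, Tch p' a' j κ) := by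
    intro κ
    refine exists_congr fun j => and_congr_right fun hj => ?_
    exact tch_congr (fun j' hj' => h j' (by omega)) (ha j hj) κ
  simp only [al, this, ww, MM_congr h, h i le_rfl]

lemma cpos_congr {p p' : ℕ → Pt} {a a' : ℕ → ℝ} {i : ℕ} (h : ∀ j ≤ i, p j = p' j)
    (ha : ∀ j < i, a j = a' j) : cpos p a i = cpos p' a' i := by
  funext κ
  unfold cpos
  congr 1
  have : {j | j < i ∧ Tch p a j κ} = {j | j < i ∧ Tch p' a' j κ} := by
    ext j
    refine and_congr_right fun hj => ?_
    exact tch_congr (fun j' hj' => h j' (by omega)) (ha j hj) κ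
  rw [this]
  refine Set.image_congr fun j hj => ?_
  unfold ps
  rw [rad_congr (fun j' hj' => h j' (by have := hj.1; omega)) (ha j hj.1), h j hj.1.le]

lemma cands_congr {p p' : ℕ → Pt} {a a' : ℕ → ℝ} {i : ℕ} (h : ∀ j ≤ i, p j = p' j)
    (ha : ∀ j < i, a j = a' j) : cands p a i = cands p' a' i := by
  simp only [cands, al_congr h ha, cpos_congr h ha, h i le_rfl]

lemma anc_eq (p : ℕ → Pt) (i : ℕ) : anc p i = sSup (cands p (anc p) i) := by
  rw [anc]
  congr 1
  exact cands_congr (fun _ _ => rfl) (fun j hj => by simp [hj])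

lemma anc_congr {p p' : ℕ → Pt} (i : ℕ) (h : ∀ j ≤ i, p j = p' j) : anc p i = anc p' i := by
  induction i using Nat.strong_induction_on with
  | _ i ih =>
    rw [anc_eq, anc_eq]
    congr 1
    exact cands_congr h (fun j hj => ih j hj (fun j' hj' => h j' (by omega)))

lemma cands_finite (p : ℕ → Pt) (a : ℕ → ℝ) (i : ℕ) : (cands p a i).Finite :=
  (((al_finite p a i).image _).inter_of_left _).insert _

lemma anc_mem (p : ℕ → Pt) (i : ℕ) : anc p i ∈ cands p (anc p) i := by
  rw [anc_eq]
  exact Set.Nonempty.csSup_mem ⟨0, Set.mem_insert _ _⟩ (cands_finite _ _ _)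

lemma le_anc (p : ℕ → Pt) (i : ℕ) {c : ℝ} (h : c ∈ cands p (anc p) i) : c ≤ anc p i := by
  rw [anc_eq]
  exact le_csSup (cands_finite _ _ _).bddAbove h

lemma anc_nonneg (p : ℕ → Pt) (i : ℕ) : 0 ≤ anc p i := le_anc p i (Set.mem_insert _ _)

lemma anc_le (p : ℕ → Pt) (i : ℕ) (h : 0 ≤ (p i).1) : anc p i ≤ (p i).1 := by
  rcases anc_mem p i with h' | h'
  · rw [h']; exact h
  · exact h'.2

lemma dd_two (e : ℕ) : (2:ℝ) ≤ dd e := by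
  unfold dd
  push_cast
  rw [pow_succ]
  have : (1:ℝ) ≤ 2^(e/2) := one_le_pow₀ (by norm_num)
  linarith

lemma rad_nonneg (p : ℕ → Pt) (i : ℕ) (h : 0 ≤ (p i).1) : 0 ≤ rad p (anc p) i :=
  div_nonneg (sub_nonneg.2 (anc_le p i h)) (by positivity)

lemma rad_mul (p : ℕ → Pt) (i : ℕ) :
    2 * dd (ee i) * rad p (anc p) i = (p i).1 - anc p i := by
  have := dd_two (ee i)
  unfold rad
  field_simp

lemma rad_le (p : ℕ → Pt) (i : ℕ) (h : 0 ≤ (p i).1) : rad p (anc p) i ≤ (p i).1 - anc p i := by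
  rw [← rad_mul]
  have := dd_two (ee i)
  have := rad_nonneg p i h
  nlinarith

lemma cpos_spec (p : ℕ → Pt) (a : ℕ → ℝ) (i : ℕ) (κ : Key) (h : ∃ j < i, Tch p a j κ) :
    ∃ j < i, Tch p a j κ ∧ cpos p a i κ = ps p a κ j := by
  have hf : (ps p a κ '' {j | j < i ∧ Tch p a j κ}).Finite :=
    ((Set.finite_Iio i).subset fun j hj => hj.1).image _
  obtain ⟨j, hj, hT⟩ := h
  have hne : (ps p a κ '' {j | j < i ∧ Tch p a j κ}).Nonempty :=
    ⟨_, Set.mem_image_of_mem _ ⟨hj, hT⟩⟩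
  obtain ⟨j', hj', he⟩ := hne.csInf_mem hf
  exact ⟨j', hj'.1, hj'.2, he.symm⟩

lemma cpos_le (p : ℕ → Pt) (a : ℕ → ℝ) (i : ℕ) (κ : Key) {j : ℕ} (hj : j < i) (h : Tch p a j κ) :
    cpos p a i κ ≤ ps p a κ j := by
  have hf : (ps p a κ '' {j | j < i ∧ Tch p a j κ}).Finite :=
    ((Set.finite_Iio i).subset fun j hj => hj.1).image _
  exact csInf_le hf.bddBelow (Set.mem_image_of_mem _ ⟨hj, h⟩)

lemma ee_mono {i j : ℕ} (h : i ≤ j) : ee i ≤ ee j :=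
  Nat.clog_mono_right _ (Nat.clog_mono_right _ (by omega))

lemma le_MM (p : ℕ → Pt) (i : ℕ) : (p i).1 ≤ MM p i := by
  cases i with
  | zero => exact le_rfl
  | succ i => exact le_max_right _ _

lemma MM_mono (p : ℕ → Pt) : Monotone (MM p) :=
  monotone_nat_of_le_succ fun _ => le_max_left _ _

lemma ww_mono (p : ℕ → Pt) {i j : ℕ} (h : i ≤ j) (hi : 0 < (p i).1) : ww p i ≤ ww p j :=
  Int.clog_mono_right (hi.trans_le (le_MM p i)) (MM_mono p h)

lemma MM_le_ww (p : ℕ → Pt) (i : ℕ) : MM p i ≤ 2^(ww p i) := by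
  have := Int.self_le_zpow_clog (b := 2) (by norm_num) (MM p i)
  simpa [ww] using this

lemma tch_pos {p : ℕ → Pt} {a : ℕ → ℝ} {i : ℕ} {κ : Key} (h : Tch p a i κ) : κ.sc ≤ (p i).1 := by
  obtain ⟨h1, h2, h3, h4, h5, h6, h7, h8⟩ := h
  have := κ.sc_pos
  have : (1:ℝ) ≤ κ.m := by exact_mod_cast h4
  nlinarith

structure Good (p : ℕ → Pt) (N : ℕ) : Prop where
  x0 : ∀ i < N, 0 ≤ (p i).1
  y0 : ∀ i < N, 0 ≤ (p i).2
  mono : ∀ i, i + 1 < N → (p i).2 ≤ (p (i+1)).2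

lemma Good.le {p : ℕ → Pt} {N : ℕ} (h : Good p N) {i j : ℕ} (hij : i ≤ j) (hj : j < N) :
    (p i).2 ≤ (p j).2 := by
  induction j, hij using Nat.le_induction with
  | base => exact le_rfl
  | succ j _ ih => exact (ih (by omega)).trans (h.mono j hj)

lemma al_down {p : ℕ → Pt} {N : ℕ} (hg : Good p N) {a : ℕ → ℝ} {i j i' : ℕ} {κ : Key}
    (hi : i < N) (h : κ ∈ al p a i) (hT : Tch p a j κ) (h1 : j < i') (h2 : i' ≤ i) :
    κ ∈ al p a i' := by
  obtain ⟨a1, a2, a3, _⟩ := h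
  have hpos : 0 < (p j).1 := κ.sc_pos.trans_le (tch_pos hT)
  refine ⟨?_, ?_, (hg.le h2 hi).trans a3, j, h1, hT⟩
  · have b1 := ee_mono h1.le
    have b2 := ee_mono h2
    have := hT.1
    omega
  · have b1 := ww_mono p h1.le hpos
    have b3 := ww_mono p (h1.le.trans h2) hpos
    have b2 : ww p i' ≤ ww p i :=
      Int.clog_mono_right ((hpos.trans_le (le_MM p j)).trans_le (MM_mono p h1.le)) (MM_mono p h2)
    have := hT.2.1
    omega

def prevT (p : ℕ → Pt) : ℕ → ℝ
  | 0 => 0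
  | i+1 => (p i).2

def Draw (p : ℕ → Pt) (i : ℕ) : Set Pt :=
  (segment ℝ ((0, prevT p i) : Pt) (0, (p i).2) ∪
    segment ℝ ((anc p i, (p i).2) : Pt) ((p i).1, (p i).2)) ∪
  ⋃ κ ∈ (al_finite p (anc p) i).toFinset,
    segment ℝ ((cpos p (anc p) i κ, prevT p i) : Pt) (cpos p (anc p) i κ, (p i).2)

def UU (p : ℕ → Pt) (n : ℕ) : Set Pt := ⋃ i ∈ Finset.range n, Draw p i

lemma UU_succ (p : ℕ → Pt) (n : ℕ) : UU p (n+1) = Draw p n ∪ UU p n := by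
  unfold UU
  rw [Finset.range_add_one, Finset.set_biUnion_insert]

lemma prevT_congr {p p' : ℕ → Pt} {i : ℕ} (h : ∀ j ≤ i, p j = p' j) : prevT p i = prevT p' i := by
  cases i with
  | zero => rfl
  | succ i => simp [prevT, h i (by omega)]

lemma Draw_congr {p p' : ℕ → Pt} {i : ℕ} (h : ∀ j ≤ i, p j = p' j) : Draw p i = Draw p' i := by
  have ha : ∀ j < i, anc p j = anc p' j := fun j hj => anc_congr j fun j' hj' => h j' (by omega)
  simp only [Draw, prevT_congr h, h i le_rfl, anc_congr i h, al_congr h ha, cpos_congr h ha]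

lemma Good.prev {p : ℕ → Pt} {N : ℕ} (h : Good p N) {i : ℕ} (hi : i < N) :
    0 ≤ prevT p i ∧ prevT p i ≤ (p i).2 := by
  cases i with
  | zero => exact ⟨le_rfl, h.y0 0 hi⟩
  | succ i => exact ⟨h.y0 i (by omega), h.mono i hi⟩

lemma cpos_nonneg {p : ℕ → Pt} {a : ℕ → ℝ} {i : ℕ} {κ : Key} (h : κ ∈ al p a i) :
    κ.m * κ.sc ≤ cpos p a i κ ∧ 0 ≤ cpos p a i κ := by
  obtain ⟨j, _, _, he⟩ := cpos_spec p a i κ h.2.2.2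
  have h1 : κ.m * κ.sc ≤ cpos p a i κ := by rw [he]; exact le_max_right _ _
  have := κ.sc_pos
  exact ⟨h1, le_trans (by positivity) h1⟩

lemma draw_ru {p : ℕ → Pt} {N : ℕ} (h : Good p N) {i : ℕ} (hi : i < N) :
    IsRectilinearUnion (Draw p i) := by
  have h1 := h.prev hi
  have h2 := h.y0 i hi
  refine ru_union (ru_union (ru_seg ?_) (ru_seg ?_)) (ru_biUnion _ _ fun κ hκ => ru_seg ?_)
  · exact ⟨Or.inl rfl, le_rfl, h1.1, le_rfl, h2⟩
  · exact ⟨Or.inr rfl, anc_nonneg _ _, h2, h.x0 i hi, h2⟩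
  · have := (cpos_nonneg ((Set.Finite.mem_toFinset _).1 hκ)).2
    exact ⟨Or.inl rfl, this, h1.1, this, h2⟩

lemma draw_y {p : ℕ → Pt} {N : ℕ} (h : Good p N) {i : ℕ} (hi : i < N) {q : Pt}
    (hq : q ∈ Draw p i) : prevT p i ≤ q.2 := by
  have h1 := (h.prev hi).2
  rcases hq with (hq | hq) | hq
  · rw [seg_v _ _ _ h1] at hq
    obtain ⟨y, hy, rfl⟩ := hq
    exact hy.1
  · rw [seg_h _ _ _ (anc_le p i (h.x0 i hi))] at hq
    obtain ⟨y, hy, rfl⟩ := hq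
    exact h1
  · simp only [Set.mem_iUnion] at hq
    obtain ⟨κ, _, hq⟩ := hq
    rw [seg_v _ _ _ h1] at hq
    obtain ⟨y, hy, rfl⟩ := hq
    exact hy.1

lemma UU_mono (p : ℕ → Pt) (n : ℕ) : UU p n ⊆ UU p (n+1) := by
  rw [UU_succ]; exact Set.subset_union_right

lemma draw_sub (p : ℕ → Pt) (n : ℕ) : Draw p n ⊆ UU p (n+1) := by
  rw [UU_succ]; exact Set.subset_union_left

lemma reach_line {p : ℕ → Pt} {N : ℕ} (h : Good p N) {i : ℕ} (hi : i < N) :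
    MonPathTo (UU p (i+1)) (0, (p i).2) := by
  have hd : segment ℝ ((0, prevT p i) : Pt) (0, (p i).2) ⊆ UU p (i+1) := fun q hq =>
    draw_sub p i (Or.inl (Or.inl hq))
  induction i with
  | zero =>
    refine path_ext (p := (0,0)) (path_zero (hd (left_mem_segment _ _ _))) hd le_rfl (h.y0 0 hi)
  | succ i ih =>
    refine path_ext (p := (0,(p i).2)) (path_mono (ih (by omega) ?_) (UU_mono p _)) hd le_rfl
      (h.mono i hi)
    exact fun q hq => draw_sub p i (Or.inl (Or.inl hq))

lemma reach {p : ℕ → Pt} {N : ℕ} (h : Good p N) (i : ℕ) : i < N →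
    ∀ u, anc p i ≤ u → u ≤ (p i).1 → MonPathTo (UU p (i+1)) (u, (p i).2) := by
  induction i using Nat.strong_induction_on with
  | _ i ih =>
    intro hi u hu1 hu2
    have hanc : MonPathTo (UU p (i+1)) (anc p i, (p i).2) := by
      rcases anc_mem p i with h0 | ⟨⟨κ, hκ, hc⟩, _⟩
      · rw [h0]; exact reach_line h hi
      · rw [← hc]
        obtain ⟨j, hj, hT, he⟩ := cpos_spec p (anc p) i κ hκ.2.2.2
        rw [he]
        have key : ∀ i', j ≤ i' → i' ≤ i → MonPathTo (UU p (i'+1)) (ps p (anc p) κ j, (p i').2) := by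
          intro i' hi'
          induction i', hi' using Nat.le_induction with
          | base =>
            intro _
            have hx := h.x0 j (by omega)
            have r1 := rad_le p j hx
            have r2 := rad_nonneg p j hx
            refine ih j hj (by omega) _ ?_ ?_
            · exact le_trans (by linarith) (le_max_left _ _)
            · exact max_le (by linarith) hT.2.2.2.2.2.2.1
          | succ i' hji ih' =>
            intro hle
            have hal := al_down h hi hκ hT (i' := i'+1) (by omega) hle
            have hce : cpos p (anc p) (i'+1) κ = ps p (anc p) κ j := by
              refine le_antisymm (cpos_le _ _ _ _ (by omega) hT) ?_
              obtain ⟨j', hj', hT', he'⟩ := cpos_spec p (anc p) (i'+1) κ hal.2.2.2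
              rw [he', ← he]
              exact cpos_le _ _ _ _ (by omega) hT'
            refine path_ext (p := (ps p (anc p) κ j, (p i').2))
              (path_mono (ih' (by omega)) (UU_mono p _)) ?_ le_rfl (h.mono i' (by omega))
            intro q hq
            refine draw_sub p (i'+1) (Or.inr ?_)
            simp only [Set.mem_iUnion]
            refine ⟨κ, (Set.Finite.mem_toFinset _).2 hal, ?_⟩
            rw [hce]
            exact hq
        exact key i hj.le le_rfl
    refine path_ext hanc ?_ hu1 le_rfl
    intro q hq
    refine draw_sub p i (Or.inl (Or.inr ?_))
    rw [seg_h _ _ _ (hu1.trans hu2)]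
    rw [seg_h _ _ _ hu1] at hq
    obtain ⟨y, hy, rfl⟩ := hq
    exact ⟨y, ⟨hy.1, hy.2.trans hu2⟩, rfl⟩

def sq (Q : List Pt) (i : ℕ) : Pt := Q.getD i (0,0)

def Alg (Q : List Pt) : Set Pt := UU (sq Q) Q.length

lemma good_sq {Q : List Pt} (h : ValidRSA Q) : Good (sq Q) Q.length := by
  obtain ⟨h1, h2⟩ := h
  have hmem : ∀ i < Q.length, sq Q i ∈ Q := by
    intro i hi
    simp only [sq, List.getD_eq_getElem _ _ hi]
    exact List.getElem_mem hi
  refine ⟨fun i hi => (h1 _ (hmem i hi)).1, fun i hi => (h1 _ (hmem i hi)).2, fun i hi => ?_⟩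
  have := List.isChain_iff_getElem.1 h2 i hi
  simp only [sq, List.getD_eq_getElem _ _ hi, List.getD_eq_getElem _ _ (show i < Q.length by omega)]
  exact this

lemma UU_le (p : ℕ → Pt) {m n : ℕ} (h : m ≤ n) : UU p m ⊆ UU p n := by
  refine Set.biUnion_subset_biUnion_left fun i hi => ?_
  have := Finset.mem_range.1 hi
  exact Finset.mem_range.2 (by omega)

lemma alg_feasible {Q : List Pt} (h : ValidRSA Q) : FeasibleRSA Q (Alg Q) := by
  have hg := good_sq h
  refine ⟨ru_biUnion _ _ fun i hi => draw_ru hg (Finset.mem_range.1 hi), fun q hq => ?_⟩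
  obtain ⟨i, hi, rfl⟩ := List.getElem_of_mem hq
  have e : sq Q i = Q[i] := by simp only [sq, List.getD_eq_getElem _ _ hi]
  rw [← e]
  exact path_mono (reach hg i hi (sq Q i).1 (anc_le _ _ (hg.x0 i hi)) le_rfl) (UU_le _ hi)

lemma alg_online : OnlineRSA Alg := by
  refine ⟨fun Q h => alg_feasible h, fun Q p h => ?_⟩
  have hg := good_sq h
  have hl : (Q ++ [p]).length = Q.length + 1 := by simp
  have hs : ∀ j < Q.length, sq (Q ++ [p]) j = sq Q j := by
    intro j hj
    simp only [sq, List.getD_eq_getElem?_getD, List.getElem?_append_left hj]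
  have e : Alg (Q ++ [p]) = Draw (sq (Q ++ [p])) Q.length ∪ Alg Q := by
    unfold Alg
    rw [hl, UU_succ]
    congr 1
    refine Set.iUnion₂_congr fun i hi => Draw_congr fun j hj => hs j ?_
    have := Finset.mem_range.1 hi
    omega
  rw [e]
  refine ⟨Set.subset_union_right, ?_⟩
  rintro q ⟨hq | hq, hq'⟩
  · refine le_trans (le_of_eq ?_) (draw_y hg (by omega) hq)
    rcases List.eq_nil_or_concat Q with rfl | ⟨Q', z, rfl⟩
    · simp [lastY, prevT]
    · simp [lastY, prevT, sq]
  · exact absurd hq hq'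


structure Low (p : ℕ → Pt) (N : ℕ) (O : ℝ) : Prop where
  pk : ∀ {ι : Type} (s : Finset ι) (rep : ι → ℕ) (ρ : ι → ℝ),
    (∀ a ∈ s, rep a < N ∧ 0 < ρ a ∧ ρ a ≤ (p (rep a)).1) →
    (∀ a ∈ s, ∀ b ∈ s, a ≠ b → Disjoint (box (p (rep a)) (ρ a)) (box (p (rep b)) (ρ b))) →
    ∑ a ∈ s, ρ a ≤ O
  yt : ∀ i < N, (p i).2 ≤ O

lemma Low.nonneg {p : ℕ → Pt} {N : ℕ} {O : ℝ} (h : Low p N O) : 0 ≤ O := by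
  simpa using h.pk (∅ : Finset ℕ) (fun _ => 0) (fun _ => 0) (by simp) (by simp)

lemma Low.x {p : ℕ → Pt} {N : ℕ} {O : ℝ} (h : Low p N O) {i : ℕ} (hi : i < N) : (p i).1 ≤ O := by
  rcases le_or_gt (p i).1 0 with h0 | h0
  · exact h0.trans h.nonneg
  · simpa using h.pk ({i} : Finset ℕ) (fun _ => i) (fun _ => (p i).1)
      (by simp [hi, h0]) (by simp)

lemma Low.M {p : ℕ → Pt} {N : ℕ} {O : ℝ} (h : Low p N O) {i : ℕ} (hi : i < N) : MM p i ≤ O := by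
  induction i with
  | zero => exact h.x hi
  | succ i ih => exact max_le (ih (by omega)) (h.x hi)

lemma Low.w {p : ℕ → Pt} {N : ℕ} {O : ℝ} (h : Low p N O) {i : ℕ} (hi : i < N)
    (h0 : 0 < (p i).1) : (2:ℝ)^(ww p i) ≤ 2 * O := by
  have h1 := Int.zpow_pred_clog_lt_self (b := 2) (by norm_num) (h0.trans_le (le_MM p i))
  have h2 : (2:ℝ)^(ww p i) = 2 * 2^(ww p i - 1) := by
    rw [zpow_sub_one₀ (by norm_num)]; ring
  rw [h2]
  have h3 := h.M hi
  have h4 : (2:ℝ)^(ww p i - 1) < MM p i := by simpa [ww] using h1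
  linarith

lemma box_disj_of_y {p q : Pt} {ρ σ : ℝ} (h : p.2 ≤ q.2 - σ) : Disjoint (box p ρ) (box q σ) := by
  rw [Set.disjoint_left]
  rintro z ⟨_, h1⟩ ⟨_, h2⟩
  have := h1.2
  have := h2.1
  linarith

lemma pack_phase {p : ℕ → Pt} {N : ℕ} {O : ℝ} (hg : Good p N) (h : Low p N O) {ι : Type}
    (s : Finset ι) (rep : ι → ℕ) (ρ : ι → ℝ)
    (hp : ∀ a ∈ s, rep a < N ∧ 0 < ρ a ∧ ρ a ≤ (p (rep a)).1)
    (hd : ∀ a ∈ s, ∀ b ∈ s, a ≠ b → ww p (rep a) = ww p (rep b) →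
      Disjoint (box (p (rep a)) (ρ a)) (box (p (rep b)) (ρ b))) :
    ∑ a ∈ s, ρ a ≤ 5 * O := by
  classical
  let fs : ℤ → ℕ := fun w => sInf {i | ww p i = w ∧ 0 < (p i).1}
  have hx : ∀ a ∈ s, 0 < (p (rep a)).1 := fun a ha => (hp a ha).2.1.trans_le (hp a ha).2.2
  have fle : ∀ a ∈ s, fs (ww p (rep a)) ≤ rep a := fun a ha => Nat.sInf_le ⟨rfl, hx a ha⟩
  have fmem : ∀ a ∈ s, ww p (fs (ww p (rep a))) = ww p (rep a) ∧
      0 < (p (fs (ww p (rep a)))).1 := fun a ha =>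
    Nat.sInf_mem (s := {i | ww p i = ww p (rep a) ∧ 0 < (p i).1}) ⟨rep a, rfl, hx a ha⟩
  let P : ι → Prop := fun a => (p (rep a)).2 - ρ a < (p (fs (ww p (rep a)))).2
  rw [← Finset.sum_filter_add_sum_filter_not s P]
  have hnc : ∑ a ∈ s.filter (fun a => ¬ P a), ρ a ≤ O := by
    refine h.pk _ rep ρ (fun a ha => hp a (Finset.mem_filter.1 ha).1) ?_
    have hlt : ∀ a ∈ s, ∀ b ∈ s, ¬ P b → ww p (rep a) < ww p (rep b) →
        Disjoint (box (p (rep a)) (ρ a)) (box (p (rep b)) (ρ b)) := by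
      intro a ha b hb hPb hw
      refine box_disj_of_y (le_trans ?_ (not_lt.1 hPb))
      refine hg.le ?_ ((fle b hb).trans_lt (hp b hb).1)
      by_contra hcon
      have := ww_mono p (not_le.1 hcon).le (fmem b hb).2
      rw [(fmem b hb).1] at this
      omega
    intro a ha b hb hab
    rw [Finset.mem_filter] at ha hb
    rcases lt_trichotomy (ww p (rep a)) (ww p (rep b)) with h1 | h1 | h1
    · exact hlt a ha.1 b hb.1 hb.2 h1
    · exact hd a ha.1 b hb.1 hab h1
    · exact (hlt b hb.1 a ha.1 ha.2 h1).symm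
  have hcr : ∑ a ∈ s.filter P, ρ a ≤ 4 * O := by
    rcases (s.filter P).eq_empty_or_nonempty with he | hne
    · rw [he]; simpa using h.nonneg
    obtain ⟨a0, ha0, hmax⟩ := Finset.exists_max_image (s.filter P) (fun a => ww p (rep a)) hne
    have ha0s := (Finset.mem_filter.1 ha0).1
    rw [← Finset.sum_fiberwise_of_maps_to
      (t := (s.filter P).image (fun a => ww p (rep a))) (g := fun a => ww p (rep a))
      (fun a ha => Finset.mem_image_of_mem _ ha)]
    calc _ ≤ ∑ w ∈ (s.filter P).image (fun a => ww p (rep a)), (2:ℝ)^w := by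
          refine Finset.sum_le_sum fun w _ => ?_
          refine pack_line _ (fun a => (p (rep a)).1) ρ (by positivity) ?_ ?_
          · intro a ha
            simp only [Finset.mem_filter] at ha
            obtain ⟨⟨has, hP⟩, rfl⟩ := ha
            exact ⟨(hp a has).2.1, (hp a has).2.2, (le_MM p _).trans (MM_le_ww p _)⟩
          · intro a ha b hb hab
            simp only [Finset.mem_filter] at ha hb
            obtain ⟨⟨has, hPa⟩, hwa⟩ := ha
            obtain ⟨⟨hbs, hPb⟩, hwb⟩ := hb
            have hdis := hd a has b hbs hab (hwa.trans hwb.symm)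
            rw [Set.disjoint_left] at hdis ⊢
            intro u hu1 hu2
            refine hdis (a := (u, (p (fs w)).2)) ⟨hu1, ?_, ?_⟩ ⟨hu2, ?_, ?_⟩
            · have := hPa; simp only [P, hwa] at this; exact this
            · have := fle a has; rw [hwa] at this; exact hg.le this (hp a has).1
            · have := hPb; simp only [P, hwb] at this; exact this
            · have := fle b hbs; rw [hwb] at this; exact hg.le this (hp b hbs).1
      _ ≤ 2^(ww p (rep a0) + 1) := by
          refine zsum _ _ fun w hw => ?_
          obtain ⟨a, ha, rfl⟩ := Finset.mem_image.1 hw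
          exact hmax a ha
      _ ≤ 4 * O := by
          rw [zpow_add_one₀ (by norm_num)]
          have := h.w (hp a0 ha0s).1 (hx a0 ha0s)
          linarith
  linarith

lemma scl_succ (e : ℕ) (w : ℤ) (k : ℕ) : scl e w k = dd e * scl e w (k+1) := by
  have := dd_two e
  unfold scl
  rw [pow_succ]
  field_simp

lemma scl_anti (e : ℕ) (w : ℤ) {k l : ℕ} (h : k ≤ l) : scl e w l ≤ scl e w k := by
  induction l, h using Nat.le_induction with
  | base => exact le_rfl
  | succ l _ ih =>
    refine le_trans ?_ ih
    rw [scl_succ e w l]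
    have := dd_two e
    have := scl_pos e w (l+1)
    nlinarith

lemma rad_le_x {p : ℕ → Pt} {i : ℕ} (h : 0 ≤ (p i).1) : rad p (anc p) i ≤ (p i).1 := by
  have := rad_le p i h
  have := anc_nonneg p i
  linarith

def Big (p : ℕ → Pt) (i : ℕ) : Prop := scl (ee i) (ww p i) (LL (ee i)) < rad p (anc p) i

lemma level {p : ℕ → Pt} {i : ℕ} (hx : 0 ≤ (p i).1) (h : Big p i) :
    ∃ l ≤ LL (ee i), rad p (anc p) i ≤ scl (ee i) (ww p i) l ∧
      scl (ee i) (ww p i) l < dd (ee i) * rad p (anc p) i := by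
  classical
  have hex : ∃ k, scl (ee i) (ww p i) k < rad p (anc p) i := ⟨_, h⟩
  have h1 := Nat.find_spec hex
  have h2 : Nat.find hex ≤ LL (ee i) := Nat.find_min' hex h
  have h3 : Nat.find hex ≠ 0 := by
    intro h0
    rw [h0] at h1
    have : scl (ee i) (ww p i) 0 = 2^(ww p i) := by simp [scl]
    have := MM_le_ww p i
    have := le_MM p i
    have := rad_le_x hx
    linarith
  obtain ⟨l, hl⟩ := Nat.exists_eq_succ_of_ne_zero h3
  have h4 : ¬ scl (ee i) (ww p i) l < rad p (anc p) i := Nat.find_min hex (by omega)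
  refine ⟨l, by omega, not_lt.1 h4, ?_⟩
  rw [hl] at h1
  rw [scl_succ]
  have := dd_two (ee i)
  exact mul_lt_mul_of_pos_left h1 (by linarith)

lemma disj_main {p : ℕ → Pt} {N : ℕ} (hg : Good p N) {i j : ℕ} (hij : i < j) (hj : j < N)
    (he : ee i = ee j) (hw : ww p i = ww p j) (hB : Big p j) :
    Disjoint (box (p i) (rad p (anc p) i)) (box (p j) (rad p (anc p) j)) := by
  rw [Set.disjoint_left]
  rintro ⟨u, y⟩ ⟨⟨a1, a2⟩, a3, a4⟩ ⟨⟨b1, b2⟩, b3, b4⟩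
  simp only at a1 a2 a3 a4 b1 b2 b3 b4
  have hxi := hg.x0 i (hij.trans hj)
  have hxj := hg.x0 j hj
  obtain ⟨l, hl, l1, l2⟩ := level hxj hB
  set δ := scl (ee j) (ww p j) l with hδ
  have hδ0 : 0 < δ := scl_pos _ _ _
  have hd := dd_two (ee j)
  have hr : 0 < rad p (anc p) j := (scl_pos _ _ _).trans hB
  have hD := rad_mul p j
  have hu0 : 0 ≤ u := by have := rad_le_x hxi; linarith
  have hti := hg.y0 i (hij.trans hj)
  -- it suffices to find a candidate
  suffices hc : ∃ c ∈ cands p (anc p) j, u - δ ≤ c by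
    obtain ⟨c, hc, hcu⟩ := hc
    have := le_anc p j hc
    nlinarith
  by_cases hm : ⌊u/δ⌋₊ = 0
  · refine ⟨0, Set.mem_insert _ _, ?_⟩
    have : u / δ < 1 := Nat.floor_eq_zero.1 hm
    rw [div_lt_one hδ0] at this
    linarith
  · let κ : Key := ⟨ee j, ww p j, l, ⌊u/δ⌋₊, ⌊(p i).2/δ⌋₊⟩
    have hsc : κ.sc = δ := rfl
    have m1 : (⌊u/δ⌋₊:ℝ) * δ ≤ u := (le_div_iff₀ hδ0).1 (Nat.floor_le (by positivity))
    have m2 : u < (⌊u/δ⌋₊ + 1) * δ := (div_lt_iff₀ hδ0).1 (Nat.lt_floor_add_one _)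
    have n1 : (⌊(p i).2/δ⌋₊:ℝ) * δ ≤ (p i).2 := (le_div_iff₀ hδ0).1 (Nat.floor_le (by positivity))
    have n2 : (p i).2 < (⌊(p i).2/δ⌋₊ + 1) * δ := (div_lt_iff₀ hδ0).1 (Nat.lt_floor_add_one _)
    have hT : Tch p (anc p) i κ := by
      refine ⟨he.symm, hw.symm, hl, Nat.one_le_iff_ne_zero.2 hm, n1, n2, m1.trans a2, ?_⟩
      exact a1.trans m2
    have hal : κ ∈ al p (anc p) j := by
      refine ⟨rfl, rfl, ?_, i, hij, hT⟩
      change (p j).2 ≤ ((⌊(p i).2/δ⌋₊:ℝ) + 2) * δ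
      linarith
    have c1 := (cpos_nonneg hal).1
    have c2 : cpos p (anc p) j κ ≤ u := by
      refine (cpos_le _ _ _ _ hij hT).trans (max_le a1.le m1)
    refine ⟨cpos p (anc p) j κ, Or.inr ⟨⟨κ, hal, rfl⟩, c2.trans b2⟩, ?_⟩
    have : (⌊u/δ⌋₊:ℝ) * δ ≤ cpos p (anc p) j κ := c1
    linarith

open Classical in
lemma sum_big {p : ℕ → Pt} {N : ℕ} {O : ℝ} (hg : Good p N) (h : Low p N O) (e : ℕ) :
    ∑ i ∈ (Finset.range N).filter (fun i => ee i = e ∧ Big p i), rad p (anc p) i ≤ 5 * O := by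
  refine pack_phase hg h _ (fun i => i) _ ?_ ?_
  · intro i hi
    simp only [Finset.mem_filter, Finset.mem_range] at hi
    exact ⟨hi.1, (scl_pos _ _ _).trans hi.2.2, rad_le_x (hg.x0 i hi.1)⟩
  · intro i hi j hj hij hw
    simp only [Finset.mem_filter, Finset.mem_range] at hi hj
    rcases lt_or_gt_of_ne hij with h1 | h1
    · exact disj_main hg h1 hj.1 (hi.2.1.trans hj.2.1.symm) hw hj.2.2
    · exact (disj_main hg h1 hi.1 (hj.2.1.trans hi.2.1.symm) hw.symm hi.2.2).symm

lemma ee_le {i e : ℕ} (h : ee i ≤ e) : i < 2^(2^e) := by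
  have h1 : Nat.clog 2 (i+1) ≤ 2^e := (Nat.clog_le_iff_le_pow (by norm_num)).1 h
  have h2 : i + 1 ≤ 2^(2^e) := (Nat.clog_le_iff_le_pow (by norm_num)).1 h1
  omega

lemma dd_LL (e : ℕ) : (2:ℝ)^(2^e) ≤ (dd e : ℝ)^(LL e) := by
  unfold dd LL
  push_cast
  rw [← pow_mul]
  refine pow_le_pow_right₀ (by norm_num) ?_
  exact (Nat.lt_mul_div_succ (2^e) (by omega)).le

open Classical in
lemma sum_H {p : ℕ → Pt} {N : ℕ} {O : ℝ} (hg : Good p N) (h : Low p N O) (e : ℕ) :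
    ∑ i ∈ (Finset.range N).filter (fun i => ee i = e), ((p i).1 - anc p i) ≤ 14 * dd e * O := by
  have hd := dd_two e
  have hO := h.nonneg
  have key : ∀ i ∈ (Finset.range N).filter (fun i => ee i = e), (p i).1 - anc p i ≤
      2 * dd e * (if Big p i then rad p (anc p) i else 0) + 4 * dd e * O / 2^(2^e) := by
    intro i hi
    simp only [Finset.mem_filter, Finset.mem_range] at hi
    obtain ⟨hi, rfl⟩ := hi
    have hnn : 0 ≤ 4 * dd (ee i) * O / 2^(2^(ee i)) := by positivity
    rw [← rad_mul]
    split_ifs with hB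
    · linarith
    · rcases (hg.x0 i hi).eq_or_lt with hx0 | hx0
      · have := rad_le_x (hg.x0 i hi)
        have : rad p (anc p) i ≤ 0 := by linarith
        nlinarith
      · have h1 := not_lt.1 hB
        have h2 : scl (ee i) (ww p i) (LL (ee i)) ≤ 2 * O / 2^(2^(ee i)) := by
          unfold scl
          exact div_le_div₀ (by positivity) (h.w hi hx0) (by positivity) (dd_LL _)
        have h3 := mul_le_mul_of_nonneg_left (h1.trans h2) (show (0:ℝ) ≤ 2 * dd (ee i) by positivity)
        refine h3.trans (le_of_eq ?_)
        ring
  refine (Finset.sum_le_sum key).trans ?_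
  rw [Finset.sum_add_distrib, ← Finset.mul_sum, ← Finset.sum_filter, Finset.filter_filter,
    Finset.sum_const, nsmul_eq_mul]
  have h1 := sum_big hg h e
  have hc : (((Finset.range N).filter (fun i => ee i = e)).card : ℝ) ≤ 2^(2^e) := by
    have : ((Finset.range N).filter (fun i => ee i = e)).card ≤ (Finset.range (2^(2^e))).card := by
      refine Finset.card_le_card fun i hi => ?_
      simp only [Finset.mem_filter, Finset.mem_range] at hi ⊢
      exact ee_le hi.2.le
    rw [Finset.card_range] at this
    exact_mod_cast this
  have h2 : (((Finset.range N).filter (fun i => ee i = e)).card : ℝ) * (4 * dd e * O / 2^(2^e))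
      ≤ 4 * dd e * O := by
    calc _ ≤ (2:ℝ)^(2^e) * (4 * dd e * O / 2^(2^e)) :=
          mul_le_mul_of_nonneg_right hc (by positivity)
      _ = _ := by field_simp
  nlinarith


open Classical in
def tF (p : ℕ → Pt) (j : ℕ) : Finset Key := (tch_finite p (anc p) j).toFinset

lemma mem_tF {p : ℕ → Pt} {j : ℕ} {κ : Key} : κ ∈ tF p j ↔ Tch p (anc p) j κ := by
  simp [tF]

open Classical in
def AK (p : ℕ → Pt) (N : ℕ) : Finset Key := (Finset.range N).biUnion (tF p)

lemma mem_AK {p : ℕ → Pt} {N : ℕ} {κ : Key} : κ ∈ AK p N ↔ ∃ j < N, Tch p (anc p) j κ := by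
  simp [AK, mem_tF]

open Classical in
lemma count {p : ℕ → Pt} {j : ℕ} (hx : 0 ≤ (p j).1) (k : ℕ)
    (h : scl (ee j) (ww p j) k < rad p (anc p) j) :
    ∑ κ ∈ (tF p j).filter (fun κ => κ.k = k), κ.sc ≤ 3 * rad p (anc p) j := by
  set δ := scl (ee j) (ww p j) k with hδ
  set r := rad p (anc p) j
  have hδ0 : 0 < δ := scl_pos _ _ _
  have hr : r ≤ (p j).1 := rad_le_x hx
  have hsc : ∀ κ ∈ (tF p j).filter (fun κ => κ.k = k), κ.sc = δ := by
    intro κ hκ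
    rw [Finset.mem_filter, mem_tF] at hκ
    unfold Key.sc
    rw [hκ.1.1, hκ.1.2.1, hκ.2]
  rw [Finset.sum_congr rfl hsc, Finset.sum_const, nsmul_eq_mul]
  have hcard : ((tF p j).filter (fun κ => κ.k = k)).card ≤
      (Finset.Icc ⌊((p j).1 - r)/δ⌋₊ ⌊(p j).1/δ⌋₊).card := by
    refine Finset.card_le_card_of_injOn (fun κ => κ.m) ?_ ?_
    · intro κ hκ
      have hs := hsc κ hκ
      have hT := mem_tF.1 (Finset.mem_filter.1 hκ).1
      obtain ⟨h1, h2, h3, h4, h5, h6, h7, h8⟩ := hT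
      rw [hs] at h7 h8
      simp only [Finset.coe_Icc, Set.mem_Icc]
      constructor
      · have : ((p j).1 - r)/δ < ((κ.m + 1 : ℕ) : ℝ) := by
          rw [div_lt_iff₀ hδ0]; push_cast; exact h8
        have := (Nat.floor_lt (div_nonneg (by linarith) hδ0.le)).2 this
        omega
      · exact Nat.le_floor ((le_div_iff₀ hδ0).2 h7)
    · intro κ hκ κ' hκ' hm
      have hs := hsc κ hκ
      have hs' := hsc κ' hκ'
      rw [Finset.mem_coe, Finset.mem_filter, mem_tF] at hκ hκ'
      obtain ⟨⟨h1, h2, h3, h4, h5, h6, h7, h8⟩, hk⟩ := hκ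
      obtain ⟨⟨g1, g2, g3, g4, g5, g6, g7, g8⟩, gk⟩ := hκ'
      rw [hs] at h5 h6
      rw [hs'] at g5 g6
      have n1 : (κ.n:ℝ) < κ'.n + 1 := lt_of_mul_lt_mul_right (h5.trans_lt g6) hδ0.le
      have n2 : (κ'.n:ℝ) < κ.n + 1 := lt_of_mul_lt_mul_right (g5.trans_lt h6) hδ0.le
      have n1' : κ.n < κ'.n + 1 := by exact_mod_cast n1
      have n2' : κ'.n < κ.n + 1 := by exact_mod_cast n2
      cases κ; cases κ'
      simp only at *
      simp only [Key.mk.injEq]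
      refine ⟨by omega, by omega, by omega, hm, by omega⟩
  rw [Nat.card_Icc] at hcard
  have hc2 : (((tF p j).filter (fun κ => κ.k = k)).card : ℝ) ≤ r/δ + 2 := by
    have a1 : (⌊(p j).1/δ⌋₊:ℝ) ≤ (p j).1/δ := Nat.floor_le (by positivity)
    have a2 : ((p j).1 - r)/δ < ⌊((p j).1 - r)/δ⌋₊ + 1 := Nat.lt_floor_add_one _
    have a3 : ⌊((p j).1 - r)/δ⌋₊ ≤ ⌊(p j).1/δ⌋₊ :=
      Nat.floor_le_floor (div_le_div_of_nonneg_right (by linarith) hδ0.le)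
    have a4 : (((tF p j).filter (fun κ => κ.k = k)).card : ℝ) + ⌊((p j).1 - r)/δ⌋₊ ≤
        ⌊(p j).1/δ⌋₊ + 1 := by exact_mod_cast (by omega)
    rw [sub_div] at a2
    rw [sub_div] at a4
    linarith
  calc _ ≤ (r/δ + 2) * δ := mul_le_mul_of_nonneg_right hc2 hδ0.le
    _ = r + 2 * δ := by field_simp
    _ ≤ _ := by linarith

open Classical in
lemma sum_K {p : ℕ → Pt} {N : ℕ} {O : ℝ} (hg : Good p N) (h : Low p N O) (e k : ℕ) :
    ∑ κ ∈ (AK p N).filter (fun κ => κ.e = e ∧ κ.k = k), κ.sc ≤ 45 * O := by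
  set K := (AK p N).filter (fun κ => κ.e = e ∧ κ.k = k) with hK
  let P : Key → Prop := fun κ => ∃ j < N, Tch p (anc p) j κ ∧ κ.sc < rad p (anc p) j
  rw [← Finset.sum_filter_add_sum_filter_not K P]
  have hbig : ∑ κ ∈ K.filter P, κ.sc ≤ 15 * O := by
    set J := (Finset.range N).filter (fun j => ee j = e ∧ Big p j) with hJ
    calc ∑ κ ∈ K.filter P, κ.sc
        ≤ ∑ κ ∈ K.filter P, ∑ j ∈ J,
          (if Tch p (anc p) j κ ∧ κ.sc < rad p (anc p) j then κ.sc else 0) := by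
          refine Finset.sum_le_sum fun κ hκ => ?_
          obtain ⟨hκ, j, hj, hT, hlt⟩ := Finset.mem_filter.1 hκ
          obtain ⟨_, hκe, hκk⟩ := Finset.mem_filter.1 hκ
          have hjJ : j ∈ J := by
            rw [hJ, Finset.mem_filter, Finset.mem_range]
            refine ⟨hj, hT.1.symm.trans hκe, lt_of_le_of_lt ?_ hlt⟩
            unfold Key.sc
            have hk := hT.2.2.1
            rw [hT.1] at hk
            rw [hT.1, hT.2.1]
            exact scl_anti _ _ hk
          refine le_trans ?_ (Finset.single_le_sum (f := fun j =>
            (if Tch p (anc p) j κ ∧ κ.sc < rad p (anc p) j then κ.sc else 0)) ?_ hjJ)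
          · simp only [hT, hlt, and_self, if_true, le_refl]
          · intro j _
            split_ifs
            · exact κ.sc_pos.le
            · exact le_rfl
      _ = ∑ j ∈ J, ∑ κ ∈ K.filter P,
          (if Tch p (anc p) j κ ∧ κ.sc < rad p (anc p) j then κ.sc else 0) := Finset.sum_comm
      _ ≤ ∑ j ∈ J, 3 * rad p (anc p) j := by
          refine Finset.sum_le_sum fun j hj => ?_
          rw [hJ, Finset.mem_filter, Finset.mem_range] at hj
          have hx := hg.x0 j hj.1
          rw [← Finset.sum_filter]
          by_cases hlt : scl (ee j) (ww p j) k < rad p (anc p) j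
          · refine le_trans ?_ (count hx k hlt)
            refine Finset.sum_le_sum_of_subset_of_nonneg ?_ (fun κ _ _ => κ.sc_pos.le)
            intro κ hκ
            simp only [hK, Finset.mem_filter] at hκ
            rw [Finset.mem_filter, mem_tF]
            exact ⟨hκ.2.1, hκ.1.1.2.2⟩
          · rw [Finset.sum_eq_zero]
            · have := rad_nonneg p j hx
              linarith
            · intro κ hκ
              exfalso
              simp only [hK, Finset.mem_filter] at hκ
              apply hlt
              have h1 := hκ.2.2
              unfold Key.sc at h1
              rw [hκ.2.1.1, hκ.2.1.2.1, hκ.1.1.2.2] at h1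
              exact h1
      _ ≤ 15 * O := by
          rw [← Finset.mul_sum]
          have := sum_big hg h e
          linarith
  have hsmall : ∑ κ ∈ K.filter (fun κ => ¬ P κ), κ.sc ≤ 30 * O := by
    have hrep : ∀ κ : Key, ∃ j, κ ∈ K.filter (fun κ => ¬ P κ) → j < N ∧ Tch p (anc p) j κ ∧
        rad p (anc p) j ≤ κ.sc := by
      intro κ
      by_cases hκ : κ ∈ K.filter (fun κ => ¬ P κ)
      · obtain ⟨hκK, hP⟩ := Finset.mem_filter.1 hκ
        obtain ⟨j, hj, hT⟩ := mem_AK.1 (Finset.mem_filter.1 hκK).1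
        refine ⟨j, fun _ => ⟨hj, hT, ?_⟩⟩
        by_contra hcon
        exact hP ⟨j, hj, hT, not_le.1 hcon⟩
      · exact ⟨0, fun h => absurd h hκ⟩
    choose rep hrep using hrep
    rw [← Finset.sum_fiberwise_of_maps_to (t := Finset.range 3 ×ˢ Finset.range 2)
      (g := fun κ : Key => (κ.m % 3, κ.n % 2))
      (fun κ _ => by
        simp only [Finset.mem_product, Finset.mem_range]
        exact ⟨Nat.mod_lt _ (by norm_num), Nat.mod_lt _ (by norm_num)⟩)]
    calc _ ≤ ∑ c ∈ Finset.range 3 ×ˢ Finset.range 2, 5 * O := by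
          refine Finset.sum_le_sum fun c _ => ?_
          refine pack_phase hg h _ rep _ ?_ ?_
          · intro κ hκ
            obtain ⟨h1, h2, h3⟩ := hrep κ (Finset.mem_filter.1 hκ).1
            exact ⟨h1, κ.sc_pos, tch_pos h2⟩
          · intro κ hκ κ' hκ' hne hw
            rw [Finset.mem_filter] at hκ hκ'
            obtain ⟨h1, hT, h3⟩ := hrep κ hκ.1
            obtain ⟨g1, gT, g3⟩ := hrep κ' hκ'.1
            have hc : (κ.m % 3, κ.n % 2) = (κ'.m % 3, κ'.n % 2) := hκ.2.trans hκ'.2.symm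
            have hmem := (Finset.mem_filter.1 (Finset.mem_filter.1 hκ.1).1).2
            have hmem' := (Finset.mem_filter.1 (Finset.mem_filter.1 hκ'.1).1).2
            have hww : κ.w = κ'.w := by rw [hT.2.1, gT.2.1, hw]
            have hsc : κ'.sc = κ.sc := by
              unfold Key.sc; rw [hww, hmem.1, hmem.2, hmem'.1, hmem'.2]
            have hδ0 := κ.sc_pos
            obtain ⟨_, _, _, _, t5, t6, t7, t8⟩ := hT
            obtain ⟨_, _, _, _, s5, s6, s7, s8⟩ := gT
            rw [hsc] at s5 s6 s7 s8 g3 ⊢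
            rw [Set.disjoint_left]
            rintro ⟨u, y⟩ ⟨⟨a1, a2⟩, a3, a4⟩ ⟨⟨b1, b2⟩, b3, b4⟩
            simp only at a1 a2 a3 a4 b1 b2 b3 b4
            have m1 : (κ.m:ℝ) < κ'.m + 3 := lt_of_mul_lt_mul_right (by linarith) hδ0.le
            have m2 : (κ'.m:ℝ) < κ.m + 3 := lt_of_mul_lt_mul_right (by linarith) hδ0.le
            have n1 : (κ.n:ℝ) < κ'.n + 2 := lt_of_mul_lt_mul_right (by linarith) hδ0.le
            have n2 : (κ'.n:ℝ) < κ.n + 2 := lt_of_mul_lt_mul_right (by linarith) hδ0.le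
            have m1' : κ.m < κ'.m + 3 := by exact_mod_cast m1
            have m2' : κ'.m < κ.m + 3 := by exact_mod_cast m2
            have n1' : κ.n < κ'.n + 2 := by exact_mod_cast n1
            have n2' : κ'.n < κ.n + 2 := by exact_mod_cast n2
            rw [Prod.mk.injEq] at hc
            apply hne
            have hm : κ.m = κ'.m := by omega
            have hn : κ.n = κ'.n := by omega
            obtain ⟨he, hk⟩ := hmem
            obtain ⟨he', hk'⟩ := hmem'
            cases κ; cases κ'
            simp only at hm hn he hk he' hk' hww
            simp only [Key.mk.injEq]
            exact ⟨he.trans he'.symm, hww, hk.trans hk'.symm, hm, hn⟩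
      _ = 30 * O := by
          simp only [Finset.sum_const, Finset.card_product, Finset.card_range, nsmul_eq_mul]
          norm_num
          ring
  linarith

open Classical in
lemma sum_AK {p : ℕ → Pt} {N : ℕ} {O : ℝ} (hg : Good p N) (h : Low p N O) :
    ∑ κ ∈ AK p N, κ.sc ≤ ∑ e ∈ Finset.range (ee (N-1) + 1), 45 * ((LL e + 1) * O) := by
  rw [← Finset.sum_fiberwise_of_maps_to (t := Finset.range (ee (N-1) + 1))
      (g := fun κ : Key => κ.e)]
  · refine Finset.sum_le_sum fun e _ => ?_
    rw [← Finset.sum_fiberwise_of_maps_to (t := Finset.range (LL e + 1))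
      (g := fun κ : Key => κ.k)]
    · calc _ ≤ ∑ k ∈ Finset.range (LL e + 1), 45 * O := by
            refine Finset.sum_le_sum fun k _ => ?_
            rw [Finset.filter_filter]
            exact sum_K hg h e k
        _ = _ := by
            simp only [Finset.sum_const, Finset.card_range, nsmul_eq_mul]
            push_cast
            ring
    · intro κ hκ
      obtain ⟨hκ2, rfl⟩ := Finset.mem_filter.1 hκ
      obtain ⟨j, hj, hT⟩ := mem_AK.1 hκ2
      exact Finset.mem_range.2 (Nat.lt_succ_of_le hT.2.2.1)
  · intro κ hκ
    obtain ⟨j, hj, hT⟩ := mem_AK.1 hκ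
    rw [hT.1]
    exact Finset.mem_range.2 (Nat.lt_succ_of_le (ee_mono (by omega)))

open Classical in
lemma sum_V {p : ℕ → Pt} {N : ℕ} (hg : Good p N) :
    ∑ i ∈ Finset.range N, ∑ _κ ∈ (al_finite p (anc p) i).toFinset, ((p i).2 - prevT p i) ≤
      2 * ∑ κ ∈ AK p N, κ.sc := by
  rcases N.eq_zero_or_pos with rfl | hN
  · simp only [Finset.range_zero, Finset.sum_empty]
    exact mul_nonneg (by norm_num) (Finset.sum_nonneg fun κ _ => κ.sc_pos.le)
  obtain ⟨n, rfl⟩ : ∃ n, N = n + 1 := ⟨N - 1, by omega⟩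
  rw [Finset.sum_range_succ']
  have h0 : (al_finite p (anc p) 0).toFinset = ∅ := by
    rw [Finset.eq_empty_iff_forall_notMem]
    intro κ hκ
    obtain ⟨_, _, _, j, hj, _⟩ := (Set.Finite.mem_toFinset _).1 hκ
    omega
  rw [h0, Finset.sum_empty, add_zero, Finset.mul_sum]
  calc _ = ∑ i ∈ Finset.range n, ∑ κ ∈ AK p (n+1),
          (if κ ∈ al p (anc p) (i+1) then (p (i+1)).2 - (p i).2 else 0) := by
        refine Finset.sum_congr rfl fun i hi => ?_
        rw [← Finset.sum_filter]
        refine Finset.sum_congr ?_ fun _ _ => rfl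
        ext κ
        rw [Set.Finite.mem_toFinset, Finset.mem_filter]
        refine ⟨fun h => ⟨?_, h⟩, fun h => h.2⟩
        obtain ⟨_, _, _, j, hj, hT⟩ := h
        have := Finset.mem_range.1 hi
        exact mem_AK.2 ⟨j, by omega, hT⟩
    _ = ∑ κ ∈ AK p (n+1), ∑ i ∈ Finset.range n,
          (if κ ∈ al p (anc p) (i+1) then (p (i+1)).2 - (p i).2 else 0) := Finset.sum_comm
    _ ≤ ∑ κ ∈ AK p (n+1), 2 * κ.sc := by
        refine Finset.sum_le_sum fun κ _ => ?_
        rw [← Finset.sum_filter]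
        have hs := κ.sc_pos
        have := telescope (fun i => (p i).2) (κ.n * κ.sc) ((κ.n+2)*κ.sc) (by nlinarith)
          (fun i => κ ∈ al p (anc p) i) (n+1) hg.mono (by
            intro i hi hal
            obtain ⟨_, _, h3, j, hj, hT⟩ := hal
            exact ⟨hT.2.2.2.2.1.trans (hg.le (by omega) (by omega)), h3⟩)
        simp only [Nat.add_sub_cancel] at this
        refine this.trans (le_of_eq (by ring))

lemma cost_biUnion {ι : Type} (s : Finset ι) (f : ι → Set Pt) (c : ι → ℝ) (hc : ∀ a ∈ s, 0 ≤ c a)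
    (h : ∀ a ∈ s, μH[1] (f a) ≤ ENNReal.ofReal (c a)) :
    μH[1] (⋃ a ∈ s, f a) ≤ ENNReal.ofReal (∑ a ∈ s, c a) := by
  rw [ENNReal.ofReal_sum_of_nonneg hc]
  exact (measure_biUnion_finset_le s f).trans (Finset.sum_le_sum h)

lemma cost_UU {p : ℕ → Pt} {N : ℕ} {O : ℝ} (hg : Good p N) (h : Low p N O) :
    μH[1] (UU p N) ≤ ENNReal.ofReal
      ((1 + 90 * ∑ e ∈ Finset.range (ee (N-1) + 1), ((dd e : ℝ) + (LL e + 1))) * O) := by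
  classical
  have hO := h.nonneg
  have hdraw : ∀ i ∈ Finset.range N, 0 ≤ (p i).2 - prevT p i ∧ 0 ≤ (p i).1 - anc p i := by
    intro i hi
    have hi := Finset.mem_range.1 hi
    exact ⟨sub_nonneg.2 (hg.prev hi).2, sub_nonneg.2 (anc_le p i (hg.x0 i hi))⟩
  have h1 : μH[1] (UU p N) ≤ ENNReal.ofReal (∑ i ∈ Finset.range N,
      (((p i).2 - prevT p i) + ((p i).1 - anc p i) +
        ∑ _κ ∈ (al_finite p (anc p) i).toFinset, ((p i).2 - prevT p i))) := by
    refine cost_biUnion _ _ _ ?_ ?_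
    · intro i hi
      have := hdraw i hi
      have : 0 ≤ ∑ _κ ∈ (al_finite p (anc p) i).toFinset, ((p i).2 - prevT p i) :=
        Finset.sum_nonneg fun _ _ => this.1
      linarith
    · intro i hi
      obtain ⟨d1, d2⟩ := hdraw i hi
      have hs : 0 ≤ ∑ _κ ∈ (al_finite p (anc p) i).toFinset, ((p i).2 - prevT p i) :=
        Finset.sum_nonneg fun _ _ => d1
      rw [ENNReal.ofReal_add (by linarith) hs, ENNReal.ofReal_add d1 d2]
      refine (measure_union_le _ _).trans (add_le_add ((measure_union_le _ _).trans
        (add_le_add ?_ ?_)) ?_)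
      · exact cost_v _ _ _ (by linarith)
      · exact cost_h _ _ _ (by linarith)
      · exact cost_biUnion _ _ _ (fun _ _ => d1) fun κ _ => cost_v _ _ _ (by linarith)
  refine h1.trans (ENNReal.ofReal_le_ofReal ?_)
  rw [Finset.sum_add_distrib, Finset.sum_add_distrib]
  have hT : ∑ i ∈ Finset.range N, ((p i).2 - prevT p i) ≤ O := by
    rcases N.eq_zero_or_pos with rfl | hN
    · simpa using hO
    have : ∀ n, ∑ i ∈ Finset.range n, ((p i).2 - prevT p i) = prevT p n := by
      intro n
      induction n with
      | zero => simp [prevT]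
      | succ n ih => rw [Finset.sum_range_succ, ih]; simp [prevT]
    rw [this]
    obtain ⟨n, rfl⟩ : ∃ n, N = n + 1 := ⟨N - 1, by omega⟩
    exact h.yt n (by omega)
  have hH : ∑ i ∈ Finset.range N, ((p i).1 - anc p i) ≤
      ∑ e ∈ Finset.range (ee (N-1) + 1), 14 * dd e * O := by
    rw [← Finset.sum_fiberwise_of_maps_to (t := Finset.range (ee (N-1) + 1)) (g := ee)]
    · exact Finset.sum_le_sum fun e _ => sum_H hg h e
    · intro i hi
      have := Finset.mem_range.1 hi
      exact Finset.mem_range.2 (Nat.lt_succ_of_le (ee_mono (by omega)))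
  have hV := (sum_V hg).trans (mul_le_mul_of_nonneg_left (sum_AK hg h) (by norm_num : (0:ℝ) ≤ 2))
  have hfin : ∑ e ∈ Finset.range (ee (N-1) + 1), 14 * dd e * O +
      2 * ∑ e ∈ Finset.range (ee (N-1) + 1), 45 * ((LL e + 1) * O) ≤
      (90 * ∑ e ∈ Finset.range (ee (N-1) + 1), ((dd e : ℝ) + (LL e + 1))) * O := by
    rw [Finset.mul_sum, ← Finset.sum_add_distrib, Finset.mul_sum, Finset.sum_mul]
    refine Finset.sum_le_sum fun e _ => ?_
    have : 0 ≤ (dd e : ℝ) * O := by positivity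
    nlinarith
  linarith

/-! numerics -/

lemma succ_le_pow (e : ℕ) : (e:ℝ) + 1 ≤ 2^e := by
  have : e + 1 ≤ 2^e := Nat.lt_two_pow_self
  exact_mod_cast this

lemma num1 (e : ℕ) : (dd e : ℝ) + (LL e + 1) ≤ 8 * (2^e / (e+1)) := by
  have hb : (e:ℝ) + 1 ≤ 2 * ((e/2:ℕ) + 1) := by
    have : e + 1 ≤ 2 * (e/2 + 1) := by omega
    exact_mod_cast this
  have he : (0:ℝ) < (e:ℝ) + 1 := by positivity
  have h1 : (dd e : ℝ) ≤ 4 * (2^e/(e+1)) := by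
    rw [mul_div_assoc', le_div_iff₀ he]
    unfold dd
    push_cast
    have h2 := succ_le_pow (e/2)
    have h3 : (2:ℝ)^(e/2) * 2^(e/2) ≤ 2^e := by
      rw [← pow_add]
      exact pow_le_pow_right₀ (by norm_num) (by omega)
    rw [pow_succ]
    have h4 : (0:ℝ) < 2^(e/2) := by positivity
    nlinarith
  have h2 : (LL e : ℝ) + 1 ≤ 4 * (2^e/(e+1)) := by
    have a1 : ((2^e/(e/2+1) : ℕ) : ℝ) ≤ 2^e/((e/2:ℕ)+1) := by
      refine (Nat.cast_div_le).trans (le_of_eq ?_)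
      push_cast
      rfl
    have a2 : (2:ℝ)^e/((e/2:ℕ)+1) ≤ 2 * (2^e/(e+1)) := by
      rw [mul_div_assoc', div_le_div_iff₀ (by positivity) he]
      have : (0:ℝ) < 2^e := by positivity
      nlinarith
    have a3 : (1:ℝ) ≤ 2^e/(e+1) := by
      rw [le_div_iff₀ he, one_mul]; exact succ_le_pow e
    unfold LL
    rw [Nat.cast_add, Nat.cast_one]
    linarith
  linarith

lemma num2 (E : ℕ) : ∑ e ∈ Finset.range (E+1), ((2:ℝ)^e/(e+1)) ≤ 4 * (2^E/(E+1)) := by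
  induction E with
  | zero => norm_num
  | succ E ih =>
    rw [Finset.sum_range_succ]
    rcases E.eq_zero_or_pos with rfl | hE
    · norm_num [Finset.sum_range_succ]
    have hE' : (1:ℝ) ≤ E := by exact_mod_cast hE
    have : 4 * ((2:ℝ)^E/(E+1)) ≤ 3 * (2^(E+1)/((E+1:ℕ)+1)) := by
      rw [mul_div_assoc', mul_div_assoc', div_le_div_iff₀ (by positivity) (by positivity)]
      push_cast
      rw [pow_succ]
      have : (0:ℝ) < 2^E := by positivity
      nlinarith
    linarith

lemma num3 (N : ℕ) (hN : 1 ≤ N) : (2:ℝ)^(ee (N-1))/(ee (N-1) + 1) ≤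
    4 * max 1 (Real.log N / Real.log (Real.log N)) := by
  have hee : ee (N-1) = Nat.clog 2 (Nat.clog 2 N) := by
    unfold ee; rw [Nat.sub_add_cancel hN]
  set E := ee (N-1) with hE
  rcases lt_or_ge E 2 with h | h
  · have h1 : (2:ℝ)^E/(E+1) ≤ 2 := by
      interval_cases E <;> norm_num
    have := le_max_left 1 (Real.log N / Real.log (Real.log N))
    linarith
  · refine le_trans ?_ (mul_le_mul_of_nonneg_left (le_max_right _ _) (by norm_num))
    have hl : 0.69 < Real.log 2 := by have := Real.log_two_gt_d9; linarith
    have hl' : Real.log 2 < 1 := by have := Real.log_two_lt_d9; linarith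
    obtain ⟨F, hF⟩ : ∃ F, E = F + 1 := ⟨E - 1, by omega⟩
    have hNpos : (0:ℝ) < N := by exact_mod_cast hN
    have h1 : 2^F < Nat.clog 2 N := by
      by_contra hcon
      have := (Nat.clog_le_iff_le_pow (by norm_num)).2 (not_lt.1 hcon)
      omega
    have h2 : 2^(2^F) < N := by
      by_contra hcon
      have := (Nat.clog_le_iff_le_pow (by norm_num)).2 (not_lt.1 hcon)
      omega
    have h3 : N ≤ 2^(2^E) := by have := ee_le (le_refl (ee (N-1))); rw [← hE] at this; omega
    have u1 : (2:ℝ)^F * Real.log 2 ≤ Real.log N := by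
      have : Real.log ((2:ℝ)^(2^F)) ≤ Real.log N :=
        Real.log_le_log (by positivity) (by exact_mod_cast h2.le)
      rw [Real.log_pow] at this
      push_cast at this
      exact this
    have u2 : Real.log N ≤ 2^E := by
      have : Real.log N ≤ Real.log ((2:ℝ)^(2^E)) :=
        Real.log_le_log hNpos (by exact_mod_cast h3)
      rw [Real.log_pow] at this
      push_cast at this
      have h5 : (0:ℝ) < 2^E := by positivity
      nlinarith
    have hF1 : (2:ℝ) ≤ 2^F := by
      calc (2:ℝ) = 2^1 := by norm_num
        _ ≤ 2^F := pow_le_pow_right₀ (by norm_num) (by omega)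
    have u3 : 1 < Real.log N := by nlinarith
    have u4 : 0 < Real.log (Real.log N) := Real.log_pos u3
    have u5 : Real.log (Real.log N) ≤ E := by
      have : Real.log (Real.log N) ≤ Real.log ((2:ℝ)^E) := Real.log_le_log (by linarith) u2
      rw [Real.log_pow] at this
      have h5 : (0:ℝ) ≤ E := by positivity
      nlinarith
    rw [mul_div_assoc', div_le_div_iff₀ (by positivity) u4]
    have h6 : (2:ℝ)^E ≤ 4 * Real.log N := by
      rw [hF, pow_succ]
      nlinarith
    have h7 : (0:ℝ) < 2^E := by positivity
    nlinarith

lemma num_final (N : ℕ) (hN : 1 ≤ N) :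
    1 + 90 * ∑ e ∈ Finset.range (ee (N-1) + 1), ((dd e : ℝ) + (LL e + 1)) ≤
      11521 * max 1 (Real.log N / Real.log (Real.log N)) := by
  have h1 : ∑ e ∈ Finset.range (ee (N-1) + 1), ((dd e : ℝ) + (LL e + 1)) ≤
      8 * ∑ e ∈ Finset.range (ee (N-1) + 1), ((2:ℝ)^e/(e+1)) := by
    rw [Finset.mul_sum]
    exact Finset.sum_le_sum fun e _ => num1 e
  have h2 := num2 (ee (N-1))
  have h3 := num3 N hN
  have := le_max_left 1 (Real.log N / Real.log (Real.log N))
  linarith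

lemma low_of_feasible {Q : List Pt} {S : Set Pt} (hS : FeasibleRSA Q S)
    (hfin : μH[1] S ≠ ⊤) : Low (sq Q) Q.length (μH[1] S).toReal := by
  have hpath : ∀ i < Q.length, MonPathTo S (sq Q i) := by
    intro i hi
    refine hS.2 _ ?_
    simp only [sq, List.getD_eq_getElem _ _ hi]
    exact List.getElem_mem hi
  refine ⟨fun s rep ρ hp hd => ?_, fun i hi => ?_⟩
  · exact (ENNReal.ofReal_le_iff_le_toReal hfin).1
      (pack_lower s (fun a => sq Q (rep a)) ρ
        (fun a ha => ⟨hpath _ (hp a ha).1, (hp a ha).2⟩) hd)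
  · exact (ENNReal.ofReal_le_iff_le_toReal hfin).1 (snd_lower (hpath i hi))

lemma alg_cost {Q : List Pt} (hQ : ValidRSA Q) :
    rsaCost (Alg Q) ≤
      ENNReal.ofReal (11521 * max 1 (Real.log Q.length / Real.log (Real.log Q.length))) *
        optRSA Q := by
  rcases Nat.eq_zero_or_pos Q.length with h0 | hN
  · have : Alg Q = ∅ := by simp [Alg, h0, UU]
    rw [this]
    simp [rsaCost]
  set R := 11521 * max 1 (Real.log Q.length / Real.log (Real.log Q.length)) with hR
  have hRpos : 0 < R := by
    have := le_max_left 1 (Real.log Q.length / Real.log (Real.log Q.length))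
    rw [hR]; linarith
  have hR0 : ENNReal.ofReal R ≠ 0 := by simpa using hRpos
  have key : rsaCost (Alg Q) / ENNReal.ofReal R ≤ optRSA Q := by
    refine le_sInf ?_
    rintro c ⟨S, hS, rfl⟩
    rw [ENNReal.div_le_iff_le_mul (Or.inl hR0) (Or.inl ENNReal.ofReal_ne_top)]
    by_cases hfin : rsaCost S = ⊤
    · rw [hfin, ENNReal.top_mul hR0]; exact le_top
    · have hl := low_of_feasible hS hfin
      refine (cost_UU (good_sq hQ) hl).trans ?_
      have hS' : rsaCost S = ENNReal.ofReal (μH[1] S).toReal := (ENNReal.ofReal_toReal hfin).symm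
      rw [hS', mul_comm (ENNReal.ofReal _), ← ENNReal.ofReal_mul hRpos.le]
      refine ENNReal.ofReal_le_ofReal ?_
      exact mul_le_mul_of_nonneg_right (num_final _ hN) hl.nonneg
  rw [ENNReal.div_le_iff_le_mul (Or.inl hR0) (Or.inl ENNReal.ofReal_ne_top)] at key
  rwa [mul_comm]

end

end RSAon


/-- There is a constant `c > 0` and a deterministic online RSA algorithm whose
cost on every valid input `Q` of `N` points is at most
`c · max(1, log N / log log N) · opt(Q)`. -/
theorem rsa_online_upper_bound :
    ∃ c : ℝ, 0 < c ∧ ∃ A : List Pt → Set Pt, OnlineRSA A ∧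
      ∀ Q : List Pt, ValidRSA Q →
        rsaCost (A Q) ≤
          ENNReal.ofReal
              (c * max 1 (Real.log Q.length / Real.log (Real.log Q.length))) *
            optRSA Q := by
  refine ⟨11521, by norm_num, RSAon.Alg, RSAon.alg_online, fun Q hQ => RSAon.alg_cost hQ⟩
end
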